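/- arXiv:1401.6039 — 2 statements merged into one kernel-verified Lean document; each statement's English description precedes it below -/
import Mathlib

section
/- For every pure-state classical-quantum channel x ↦ S_x = |ψ_x⟩⟨ψ_x| with finite input alphabet X and every probability distribution P on X, the constant-composition sphere packing exponent at the rate R_∞(P) satisfies E_sp^cc(R_∞(P), P) ≤ R_∞(P). -/
open scoped BigOperators ComplexOrder
noncomputable section

namespace SPB

/-- `-log t` with the convention that it is `+∞` for `t ≤ 0`. -/
def negLog (t : ℝ) : EReal := if t ≤ 0 then (⊤ : EReal) else ((-Real.log t : ℝ) : EReal)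

/-- Power of a positive semidefinite (more generally Hermitian) matrix by functional calculus
on the eigenvalues, with the convention `0 ^ r = 0` (so `A ^ 0` is the projection onto the
range of `A`). -/
def mpow {ι : Type*} [Fintype ι] [DecidableEq ι] (A : Matrix ι ι ℂ) (r : ℝ) :
    Matrix ι ι ℂ :=
  if hA : A.IsHermitian then
    (hA.eigenvectorUnitary : Matrix ι ι ℂ) *
      Matrix.diagonal (fun i => ((if hA.eigenvalues i = 0 then (0 : ℝ)
        else hA.eigenvalues i ^ r : ℝ) : ℂ)) *
      (star (hA.eigenvectorUnitary : Matrix ι ι ℂ))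
  else 0

/-- A density operator: positive semidefinite with trace one. -/
def IsDensity {ι : Type*} [Fintype ι] [DecidableEq ι] (A : Matrix ι ι ℂ) : Prop :=
  A.PosSemidef ∧ A.trace = 1

/-- A probability distribution on a finite alphabet. -/
def IsProbDist {X : Type*} [Fintype X] (P : X → ℝ) : Prop :=
  (∀ x, 0 ≤ P x) ∧ ∑ x, P x = 1

/-- The constant–composition sphere packing coefficient
`E₀^cc(ρ,P) = min_F -(1+ρ) ∑ₓ P(x) log Tr(Sₓ^{1/(1+ρ)} F^{ρ/(1+ρ)})`. -/
def E0cc {X : Type*} [Fintype X] {d : ℕ} (S : X → Matrix (Fin d) (Fin d) ℂ)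
    (ρ : ℝ) (P : X → ℝ) : EReal :=
  ⨅ F : {F : Matrix (Fin d) (Fin d) ℂ // IsDensity F},
    ((1 + ρ : ℝ) : EReal) *
      ∑ x, ((P x : ℝ) : EReal) *
        negLog ((Matrix.trace (mpow (S x) (1 / (1 + ρ)) * mpow F.1 (ρ / (1 + ρ)))).re)
/-- The pure state (rank-one projection) `|ψ⟩⟨ψ|` associated with a vector `ψ ∈ ℂ^d`. -/
def pureState {d : ℕ} (ψ : Fin d → ℂ) : Matrix (Fin d) (Fin d) ℂ :=
  Matrix.of fun i j => ψ i * (starRingEnd ℂ) (ψ j)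

/-- The cutoff rate `R_∞(P) = min_F -∑ₓ P(x) log Tr(Sₓ F)` (for pure-state channels). -/
def RinfPure {X : Type*} [Fintype X] {d : ℕ} (S : X → Matrix (Fin d) (Fin d) ℂ)
    (P : X → ℝ) : EReal :=
  ⨅ F : {F : Matrix (Fin d) (Fin d) ℂ // IsDensity F},
    ∑ x, ((P x : ℝ) : EReal) * negLog ((Matrix.trace (S x * F.1)).re)

/-- The sphere packing exponent `E_sp^cc(R, P) = sup_{ρ ≥ 0} (E₀^cc(ρ,P) - ρ R)`
(with an extended-real rate `R`). -/
def Espcc {X : Type*} [Fintype X] {d : ℕ} (S : X → Matrix (Fin d) (Fin d) ℂ)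
    (R : EReal) (P : X → ℝ) : EReal :=
  ⨆ ρ : {ρ : ℝ // 0 ≤ ρ}, E0cc S ρ.1 P - ((ρ.1 : ℝ) : EReal) * R

/-!
For operators `0 ≤ S ≤ 1` and `0 ≤ F ≤ 1`, taking a power with exponent at most `1` can only
increase the operator, so `Tr (S F) ≤ Tr (S ^ (1/(1+ρ)) F ^ (ρ/(1+ρ)))`. Comparing the two
minimisations at the same `F` gives `E₀^cc(ρ, P) ≤ (1 + ρ) R_∞(P)` for every `ρ ≥ 0`, and
subtracting `ρ R_∞(P)` leaves `R_∞(P)`.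
-/

lemma negLog_antitone : Antitone negLog := by
  intro s t hst
  unfold negLog
  split_ifs with ht hs hs
  · exact le_rfl
  · exact absurd (hst.trans ht) hs
  · exact le_top
  · exact EReal.coe_le_coe (neg_le_neg (Real.log_le_log (not_le.1 hs) hst))

lemma le_coe_mul_iInf {ι : Sort*} {a : EReal} {c : ℝ} (hc : 0 < c) {f : ι → EReal}
    (h : ∀ i, a ≤ c * f i) : a ≤ c * ⨅ i, f i := by
  have hc' : (0 : EReal) < c := EReal.coe_pos.2 hc
  rw [← EReal.div_le_iff_le_mul hc' (EReal.coe_ne_top c)]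
  exact le_iInf fun i => (EReal.div_le_iff_le_mul hc' (EReal.coe_ne_top c)).2 (h i)

section Loewner

open Matrix
open scoped MatrixOrder

section Trace

variable {𝕜 ι : Type*} [RCLike 𝕜] [Fintype ι] {A A' B B' : Matrix ι ι 𝕜}

lemma trace_mul_nonneg (hA : 0 ≤ A) (hB : 0 ≤ B) : 0 ≤ (A * B).trace := by
  classical
  obtain ⟨C, rfl⟩ := CStarAlgebra.nonneg_iff_eq_star_mul_self.1 hA
  rw [mul_assoc, trace_mul_comm]
  exact (hB.posSemidef.mul_mul_conjTranspose_same C).trace_nonneg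

lemma trace_mul_le_trace_mul (hA : A ≤ A') (hB : B ≤ B') (hA₀ : 0 ≤ A) (hB₀ : 0 ≤ B') :
    (A * B).trace ≤ (A' * B').trace := by
  have hright : 0 ≤ (A * (B' - B)).trace := trace_mul_nonneg hA₀ (sub_nonneg.2 hB)
  have hleft : 0 ≤ ((A' - A) * B').trace := trace_mul_nonneg (sub_nonneg.2 hA) hB₀
  rw [mul_sub, trace_sub, sub_nonneg] at hright
  rw [sub_mul, trace_sub, sub_nonneg] at hleft
  exact hright.trans hleft

lemma le_one_of_trace_le_one [DecidableEq ι] (hA : 0 ≤ A) (htr : A.trace ≤ 1) : A ≤ 1 := by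
  have hpsd : A.PosSemidef := hA.posSemidef
  have hsum : ∑ i, hpsd.1.eigenvalues i ≤ 1 := by
    rw [hpsd.1.trace_eq_sum_eigenvalues] at htr
    exact_mod_cast htr
  rw [CFC.le_one_iff (R := ℝ) A hpsd.1, hpsd.1.spectrum_real_eq_range_eigenvalues,
    Set.forall_mem_range]
  exact fun i => (Finset.single_le_sum (fun j _ => hpsd.eigenvalues_nonneg j)
    (Finset.mem_univ i)).trans hsum

end Trace

section MatrixPower

variable {ι : Type*} [Fintype ι] [DecidableEq ι] {A : Matrix ι ι ℂ}

lemma mpow_eq_cfc (hA : A.IsHermitian) (r : ℝ) :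
    mpow A r = cfc (fun t : ℝ => if t = 0 then 0 else t ^ r) A := by
  rw [mpow, dif_pos hA, hA.cfc_eq]
  rfl

lemma le_mpow (hA₀ : 0 ≤ A) (hA₁ : A ≤ 1) {r : ℝ} (hr : r ≤ 1) : A ≤ mpow A r := by
  have hherm : A.IsHermitian := hA₀.posSemidef.1
  have hspec : ∀ t ∈ spectrum ℝ A, t ≤ if t = 0 then 0 else t ^ r := by
    intro t ht
    have ht₀ : 0 ≤ t := spectrum_nonneg_of_nonneg hA₀ ht
    have ht₁ : t ≤ 1 := (CFC.le_one_iff (R := ℝ) A hherm).1 hA₁ t ht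
    split_ifs with h
    · exact h.le
    · exact Real.self_le_rpow_of_le_one ht₀ ht₁ hr
  calc A = cfc (id : ℝ → ℝ) A := (cfc_id ℝ A hherm).symm
    _ ≤ cfc (fun t : ℝ => if t = 0 then 0 else t ^ r) A :=
      cfc_mono hspec (finite_real_spectrum.continuousOn _) (finite_real_spectrum.continuousOn _)
    _ = mpow A r := (mpow_eq_cfc hherm r).symm

end MatrixPower

lemma IsDensity.nonneg {ι : Type*} [Fintype ι] [DecidableEq ι] {F : Matrix ι ι ℂ}
    (hF : IsDensity F) : 0 ≤ F :=
  hF.1.nonneg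

lemma IsDensity.le_one {ι : Type*} [Fintype ι] [DecidableEq ι] {F : Matrix ι ι ℂ}
    (hF : IsDensity F) : F ≤ 1 :=
  le_one_of_trace_le_one hF.nonneg hF.2.le

lemma isDensity_pureState {d : ℕ} {ψ : Fin d → ℂ} (hψ : ∑ i, Complex.normSq (ψ i) = 1) :
    IsDensity (pureState ψ) := by
  refine ⟨posSemidef_vecMulVec_self_star ψ, ?_⟩
  calc (pureState ψ).trace = ∑ i, (Complex.normSq (ψ i) : ℂ) :=
        Finset.sum_congr rfl fun i _ => Complex.mul_conj (ψ i)
    _ = 1 := by exact_mod_cast hψ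

section Channel

variable {X : Type*} [Fintype X] {d : ℕ} {S : X → Matrix (Fin d) (Fin d) ℂ} {P : X → ℝ}

lemma E0cc_le_mul_RinfPure (hS₀ : ∀ x, 0 ≤ S x) (hS₁ : ∀ x, S x ≤ 1) (hP : ∀ x, 0 ≤ P x)
    {ρ : ℝ} (hρ : 0 ≤ ρ) : E0cc S ρ P ≤ ((1 + ρ : ℝ) : EReal) * RinfPure S P := by
  have hpos : 0 < 1 + ρ := by positivity
  have hexpS : 1 / (1 + ρ) ≤ 1 := (div_le_one hpos).2 (by linarith)
  have hexpF : ρ / (1 + ρ) ≤ 1 := (div_le_one hpos).2 (by linarith)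
  refine le_coe_mul_iInf hpos fun ⟨F, hF⟩ => (iInf_le _ ⟨F, hF⟩).trans ?_
  have hFpow : F ≤ mpow F (ρ / (1 + ρ)) := le_mpow hF.nonneg hF.le_one hexpF
  have htrace (x : X) : (S x * F).trace ≤
      (mpow (S x) (1 / (1 + ρ)) * mpow F (ρ / (1 + ρ))).trace :=
    trace_mul_le_trace_mul (le_mpow (hS₀ x) (hS₁ x) hexpS) hFpow (hS₀ x)
      (hF.nonneg.trans hFpow)
  refine mul_le_mul_of_nonneg_left (Finset.sum_le_sum fun x _ => ?_) (EReal.coe_nonneg.2 hpos.le)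
  exact mul_le_mul_of_nonneg_left (negLog_antitone (Complex.re_le_re (htrace x)))
    (EReal.coe_nonneg.2 (hP x))

/-- When some `S x` is a mixed state, `RinfPure S P` is only an upper bound for `R_∞(P)`, whose
definition has the range projection of `S x` in place of `S x`. -/
theorem Espcc_at_Rinf_le_Rinf_general (hS₀ : ∀ x, 0 ≤ S x) (hS₁ : ∀ x, S x ≤ 1)
    (hP : ∀ x, 0 ≤ P x) : Espcc S (RinfPure S P) P ≤ RinfPure S P := by
  refine iSup_le fun ⟨ρ, hρ⟩ => EReal.sub_le_of_le_add ?_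
  calc E0cc S ρ P ≤ ((1 + ρ : ℝ) : EReal) * RinfPure S P := E0cc_le_mul_RinfPure hS₀ hS₁ hP hρ
    _ = RinfPure S P + ρ * RinfPure S P := by
      rw [EReal.coe_add, EReal.coe_one,
        EReal.right_distrib_of_nonneg zero_le_one (EReal.coe_nonneg.2 hρ), one_mul]

end Channel

end Loewner

/-- **For pure-state channels, the constant-composition sphere packing exponent at the
cutoff rate satisfies** `E_sp^cc(R_∞(P),P) ≤ R_∞(P)`. -/
theorem Espcc_at_Rinf_le_Rinf
    {X : Type*} [Fintype X] [DecidableEq X] {d : ℕ}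
    (ψ : X → Fin d → ℂ) (hψ : ∀ x, ∑ i, Complex.normSq (ψ x i) = 1)
    (P : X → ℝ) (hP : IsProbDist P) :
    Espcc (fun x => pureState (ψ x)) (RinfPure (fun x => pureState (ψ x)) P) P ≤
      RinfPure (fun x => pureState (ψ x)) P :=
  Espcc_at_Rinf_le_Rinf_general (fun x => (isDensity_pureState (hψ x)).nonneg)
    (fun x => (isDensity_pureState (hψ x)).le_one) hP.1

end SPB
end
end

section
/- Conditional sphere packing bound for varying classical-quantum channels: let A and X be finite sets, and for each a ∈ A let x ↦ S_{a,x} be a classical-quantum channel on H = ℂ^d. For every probability distribution P on A, every conditional distribution V(·|·) from A to X, every R > 0 and every 0 < ε < R, the reliability function for constant conditional composition satisfies E({C_a}, R, P, V) ≤ E_sp^cc({C_a}, R−ε, P, V), where E_sp^cc({C_a}, R, P, V) = sup_{ρ ≥ 0} [Σ_{a∈A} P(a) E_0^cc(C_a, ρ, V(·|a)) − ρR]. -/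
open scoped BigOperators ComplexOrder
noncomputable section

namespace SPB

/-- The empirical composition (type) of a word. -/
def composition {A : Type*} [Fintype A] [DecidableEq A] {n : ℕ} (w : Fin n → A) :
    A → ℝ :=
  fun a => ((Finset.univ.filter (fun i => w i = a)).card : ℝ) / (n : ℝ)

/-- The conditional composition of a word `w` given a state sequence `a`:
`condComp a w α ξ` is the fraction of the positions `i` with `a i = α` where `w i = ξ`. -/
def condComp {A X : Type*} [Fintype A] [DecidableEq A] [Fintype X] [DecidableEq X] {n : ℕ}
    (a : Fin n → A) (w : Fin n → X) : A → X → ℝ :=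
  fun α ξ => ((Finset.univ.filter (fun i => a i = α ∧ w i = ξ)).card : ℝ) /
    ((Finset.univ.filter (fun i => a i = α)).card : ℝ)

/-- The signal state of a codeword over the varying channel determined by the state
sequence `a`. -/
def signalStateVar {A X : Type*} {d n : ℕ} (S : A → X → Matrix (Fin d) (Fin d) ℂ)
    (a : Fin n → A) (w : Fin n → X) : Matrix (Fin n → Fin d) (Fin n → Fin d) ℂ :=
  Matrix.of fun i j => ∏ k, S (a k) (w k) (i k) (j k)

/-- A POVM (sub-measurement) with `M` outcomes. -/
def IsPOVM {ι : Type*} [Fintype ι] [DecidableEq ι] {M : ℕ}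
    (Pv : Fin M → Matrix ι ι ℂ) : Prop :=
  (∀ m, (Pv m).PosSemidef) ∧ (1 - ∑ m, Pv m).PosSemidef

/-- `P_{e,max}`: the smallest maximum error probability of length-`n` codes of rate at
least `R`, used over the varying channel determined by the state sequence `a`, all of whose
codewords have conditional composition `W` given `a`. -/
def PemaxCond {A X : Type*} [Fintype A] [DecidableEq A] [Fintype X] [DecidableEq X] {d : ℕ}
    (S : A → X → Matrix (Fin d) (Fin d) ℂ) (n : ℕ) (R : ℝ)
    (a : Fin n → A) (W : A → X → ℝ) : ℝ :=
  sInf {e | ∃ (M : ℕ) (w : Fin M → Fin n → X)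
      (Pv : Fin M → Matrix (Fin n → Fin d) (Fin n → Fin d) ℂ),
      Real.exp (n * R) ≤ M ∧ (∀ m, condComp a (w m) = W) ∧ IsPOVM Pv ∧
      e = ⨆ m : Fin M, (1 - (Matrix.trace (Pv m * signalStateVar S a (w m))).re)}

/-- The reliability function `E({Cₐ}, R, P, V)` for constant conditional composition:
the limsup of `-(1/n) log P_{e,max}` over sequences of state sequences with compositions
tending to `P` and (realizable) conditional compositions tending to `V`. -/
def relECond {A X : Type*} [Fintype A] [DecidableEq A] [Fintype X] [DecidableEq X] {d : ℕ}
    (S : A → X → Matrix (Fin d) (Fin d) ℂ) (R : ℝ) (P : A → ℝ) (V : A → X → ℝ) : EReal :=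
  ⨆ s : {s : (n : ℕ) → (Fin n → A) × (A → X → ℝ) //
      Filter.Tendsto (fun n => composition (s n).1) Filter.atTop (nhds P) ∧
      Filter.Tendsto (fun n => (s n).2) Filter.atTop (nhds V) ∧
      ∀ n, ∃ w : Fin n → X, condComp (s n).1 w = (s n).2},
    Filter.limsup
      (fun n : ℕ => (((n : ℝ)⁻¹ : ℝ) : EReal) *
        negLog (PemaxCond S n R (s.1 n).1 (s.1 n).2))
      Filter.atTop

/-- The conditional sphere packing exponent
`E_sp^cc({Cₐ}, R, P, V) = sup_{ρ ≥ 0} [∑ₐ P(a) E₀^cc(Cₐ, ρ, V(·|a)) - ρ R]`. -/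
def EspccCond {A X : Type*} [Fintype A] [DecidableEq A] [Fintype X] [DecidableEq X] {d : ℕ}
    (S : A → X → Matrix (Fin d) (Fin d) ℂ) (R : ℝ) (P : A → ℝ) (V : A → X → ℝ) : EReal :=
  ⨆ ρ : {ρ : ℝ // 0 ≤ ρ},
    (∑ a, ((P a : ℝ) : EReal) * E0cc (S a) ρ.1 (V a)) - ((ρ.1 * R : ℝ) : EReal)

/-!
A decoder for one codeword of a code of size at least `exp (n R)` tests its signal state `Sⁿ`
against an arbitrary product state `Fⁿ`; since the decoders sum to at most `1`, one of them accepts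
`Fⁿ` with probability at most `exp (-n R)`, and a lower bound on the errors of such a test bounds
the error of the code.

Replacing every pair of states by its Nussbaum–Szkoła distributions on pairs of eigenvectors makes
this a test between classical product distributions, at the cost of a factor `1 / 2`, and turns
`Tr (S ^ (1 - s) F ^ s)` into the partition function of an exponential family. Tilting at the `s`
that minimises the averaged log-partition function against the affine target, and a Chernoff
bound, give the exponent as soon as that function lies above `-(s R + (1 - s) E)` on all of
`[0, 1]`.

With `s = ρ / (1 + ρ)` the sphere packing exponent supplies for each `s` separately an `F` with this
property. A minimax argument makes one `F` work for all `s`: the averaged logarithm is convex in `s`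
and, by operator concavity of `x ↦ x ^ s`, concave in `F`. A little depolarizing noise keeps `F`
positive definite, so that everything is continuous.
-/

/-! ### Exponential tilting -/

section Tilting

variable {Ω L : Type*} [Fintype Ω] [Fintype L]

/-- The partition function (moment generating function) of `b` under the weights `p`. -/
def partitionFn (p b : Ω → ℝ) (s : ℝ) : ℝ := ∑ k, p k * Real.exp (s * b k)

/-- The exponential family through the weights `p` in direction `b`, normalised to total mass
one. -/
def tilt (p b : Ω → ℝ) (s : ℝ) (k : Ω) : ℝ := p k * Real.exp (s * b k) / partitionFn p b s

/-- The mean of `b` under the tilted distribution; the derivative of `log (partitionFn p b)`. -/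
def tiltMean (p b : Ω → ℝ) (s : ℝ) : ℝ := ∑ k, tilt p b s k * b k

/-- The log-likelihood ratio of `tilt p b s` against `p * exp (t * b)`; the two reference weights
of a hypothesis test are obtained at `t = 0` and `t = 1`. -/
def tiltLogRatio (p b : Ω → ℝ) (s t : ℝ) (k : Ω) : ℝ :=
  (s - t) * b k - Real.log (partitionFn p b s)

/-- The relative entropy of `tilt p b s` with respect to `p * exp (t * b)`. -/
def tiltDivergence (p b : Ω → ℝ) (s t : ℝ) : ℝ := ∑ k, tilt p b s k * tiltLogRatio p b s t k

section Single

variable {p b : Ω → ℝ}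

lemma partitionFn_pos (hp : ∀ k, 0 ≤ p k) (hp0 : 0 < ∑ k, p k) (s : ℝ) :
    0 < partitionFn p b s := by
  obtain ⟨k, hk⟩ : ∃ k, 0 < p k := by
    by_contra! h
    exact hp0.not_ge (Finset.sum_nonpos fun k _ => h k)
  exact Finset.sum_pos' (fun i _ => mul_nonneg (hp i) (Real.exp_pos _).le)
    ⟨k, Finset.mem_univ k, mul_pos hk (Real.exp_pos _)⟩

lemma tilt_nonneg (hp : ∀ k, 0 ≤ p k) (s : ℝ) (k : Ω) : 0 ≤ tilt p b s k :=
  div_nonneg (mul_nonneg (hp k) (Real.exp_pos _).le)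
    (Finset.sum_nonneg fun i _ => mul_nonneg (hp i) (Real.exp_pos _).le)

lemma sum_tilt (hp : ∀ k, 0 ≤ p k) (hp0 : 0 < ∑ k, p k) (s : ℝ) : ∑ k, tilt p b s k = 1 := by
  simp only [tilt, ← Finset.sum_div]
  exact div_self (partitionFn_pos hp hp0 s).ne'

lemma tilt_mul_exp_neg_tiltLogRatio (hp : ∀ k, 0 ≤ p k) (hp0 : 0 < ∑ k, p k) (s t : ℝ) (k : Ω) :
    tilt p b s k * Real.exp (-tiltLogRatio p b s t k) = p k * Real.exp (t * b k) := by
  have hZ := partitionFn_pos (b := b) hp hp0 s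
  rw [tilt, tiltLogRatio, neg_sub, Real.exp_sub, Real.exp_log hZ, sub_mul, Real.exp_sub]
  field_simp

lemma tiltDivergence_eq (hp : ∀ k, 0 ≤ p k) (hp0 : 0 < ∑ k, p k) (s t : ℝ) :
    tiltDivergence p b s t = (s - t) * tiltMean p b s - Real.log (partitionFn p b s) := by
  simp only [tiltDivergence, tiltLogRatio, tiltMean, mul_sub, Finset.sum_sub_distrib,
    ← Finset.sum_mul, sum_tilt hp hp0, Finset.mul_sum, one_mul, mul_left_comm]

lemma log_partitionFn_add_mul_tiltMean_le (hp : ∀ k, 0 ≤ p k) (hp0 : 0 < ∑ k, p k) (s t : ℝ) :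
    Real.log (partitionFn p b s) + (t - s) * tiltMean p b s ≤ Real.log (partitionFn p b t) := by
  have hs := partitionFn_pos (b := b) hp hp0 s
  have ht := partitionFn_pos (b := b) hp hp0 t
  have jensen : Real.exp (∑ k, tilt p b s k • ((t - s) * b k)) ≤
      ∑ k, tilt p b s k • Real.exp ((t - s) * b k) :=
    convexOn_exp.map_sum_le (fun k _ => tilt_nonneg hp s k) (sum_tilt hp hp0 s)
      fun _ _ => Set.mem_univ _
  have hmean : ∑ k, tilt p b s k • ((t - s) * b k) = (t - s) * tiltMean p b s := by
    simp only [tiltMean, Finset.mul_sum, smul_eq_mul, mul_left_comm]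
  have hratio : ∑ k, tilt p b s k • Real.exp ((t - s) * b k) =
      partitionFn p b t / partitionFn p b s := by
    rw [partitionFn, Finset.sum_div]
    refine Finset.sum_congr rfl fun k _ => ?_
    rw [smul_eq_mul, tilt, div_mul_eq_mul_div, mul_assoc, ← Real.exp_add, ← add_mul,
      add_sub_cancel]
  rw [hmean, hratio, ← Real.le_log_iff_exp_le (div_pos ht hs), Real.log_div ht.ne' hs.ne'] at jensen
  linarith

lemma convexOn_log_partitionFn (hp : ∀ k, 0 ≤ p k) (hp0 : 0 < ∑ k, p k) :
    ConvexOn ℝ Set.univ fun s => Real.log (partitionFn p b s) := by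
  refine ⟨convex_univ, fun s _ t _ α β hα hβ hαβ => ?_⟩
  simp only [smul_eq_mul]
  set r := α * s + β * t with hr
  have hs := mul_le_mul_of_nonneg_left (log_partitionFn_add_mul_tiltMean_le (b := b) hp hp0 r s) hα
  have ht := mul_le_mul_of_nonneg_left (log_partitionFn_add_mul_tiltMean_le (b := b) hp hp0 r t) hβ
  have hlin : α * (Real.log (partitionFn p b r) + (s - r) * tiltMean p b r) +
      β * (Real.log (partitionFn p b r) + (t - r) * tiltMean p b r) =
      Real.log (partitionFn p b r) := by
    obtain rfl : β = 1 - α := by linarith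
    rw [hr]; ring
  linarith

lemma hasDerivAt_log_partitionFn (hp : ∀ k, 0 ≤ p k) (hp0 : 0 < ∑ k, p k) (s : ℝ) :
    HasDerivAt (fun s => Real.log (partitionFn p b s)) (tiltMean p b s) s := by
  have hZ : HasDerivAt (partitionFn p b) (∑ k, p k * Real.exp (s * b k) * b k) s := by
    refine HasDerivAt.fun_sum fun k _ => ?_
    simpa [mul_assoc] using (((hasDerivAt_id s).mul_const (b k)).exp).const_mul (p k)
  convert hZ.log (partitionFn_pos hp hp0 s).ne' using 1
  simp only [tiltMean, tilt, Finset.sum_div, div_mul_eq_mul_div]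

end Single

lemma exists_mem_Icc_mul_deriv_nonpos {f f' : ℝ → ℝ} (hf : ∀ s, HasDerivAt f (f' s) s) :
    ∃ s ∈ Set.Icc (0 : ℝ) 1, s * f' s ≤ 0 ∧ (s - 1) * f' s ≤ 0 := by
  obtain ⟨s, hs, hmin⟩ := isCompact_Icc.exists_isMinOn (Set.nonempty_Icc.2 zero_le_one)
    (f := f) fun x _ => (hf x).continuousAt.continuousWithinAt
  have hderiv : ∀ y ∈ Set.Icc (0 : ℝ) 1, 0 ≤ (y - s) * f' s := fun y hy => by
    have hy' := mem_posTangentConeAt_of_segment_subset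
      ((convex_Icc (0 : ℝ) 1).segment_subset hs (y := s + (y - s)) (by simpa using hy))
    simpa using hmin.localize.hasFDerivWithinAt_nonneg (hf s).hasFDerivAt.hasFDerivWithinAt hy'
  have h0 := hderiv 0 (by simp)
  have h1 := hderiv 1 (by simp)
  exact ⟨s, hs, by linarith, by linarith⟩

-- The minimiser over `[0, 1]` of the left side minus the right side of `h` balances the two
-- divergences.
lemma exists_sum_tiltDivergence_le {p b : L → Ω → ℝ} {w : L → ℝ} (hp : ∀ l k, 0 ≤ p l k)
    (hp0 : ∀ l, 0 < ∑ k, p l k) {E R : ℝ}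
    (h : ∀ s ∈ Set.Icc (0 : ℝ) 1,
      -(s * R + (1 - s) * E) ≤ ∑ l, w l * Real.log (partitionFn (p l) (b l) s)) :
    ∃ s : ℝ, ∑ l, w l * tiltDivergence (p l) (b l) s 0 ≤ E ∧
      ∑ l, w l * tiltDivergence (p l) (b l) s 1 ≤ R := by
  set mean : ℝ → ℝ := fun s => ∑ l, w l * tiltMean (p l) (b l) s with hmean
  have hderiv (s : ℝ) : HasDerivAt (fun s => ∑ l, w l * Real.log (partitionFn (p l) (b l) s) +
      s * (R - E)) (mean s + (R - E)) s := by
    refine .add (.fun_sum fun l _ => (hasDerivAt_log_partitionFn (hp l) (hp0 l) s).const_mul _) ?_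
    simpa using (hasDerivAt_id s).mul_const (R - E)
  obtain ⟨s, hs, hs0, hs1⟩ := exists_mem_Icc_mul_deriv_nonpos hderiv
  have hdiv (t : ℝ) : ∑ l, w l * tiltDivergence (p l) (b l) s t =
      (s - t) * mean s - ∑ l, w l * Real.log (partitionFn (p l) (b l) s) := by
    simp only [tiltDivergence_eq (hp _) (hp0 _), mul_sub, Finset.sum_sub_distrib, hmean,
      Finset.mul_sum, mul_left_comm]
  have hlog := h s hs
  refine ⟨s, ?_, ?_⟩ <;> rw [hdiv] <;> linarith

end Tilting

/-! ### Concentration of product weights -/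

section Concentration

variable {Ω L : Type*} [Fintype Ω]

lemma sum_mul_exp_le {T u : Ω → ℝ} (hT : ∀ k, 0 ≤ T k) (hT1 : ∑ k, T k = 1) {t B : ℝ}
    (hB : ∀ k, |u k| ≤ B) (ht : 0 ≤ t) (htB : t * B ≤ 1) :
    ∑ k, T k * Real.exp (t * u k) ≤ Real.exp (t * ∑ k, T k * u k + (t * B) ^ 2) := by
  have hexp (k : Ω) : Real.exp (t * u k) ≤ 1 + t * u k + (t * B) ^ 2 := by
    have htu : |t * u k| ≤ t * B := by
      rw [abs_mul, abs_of_nonneg ht]; exact mul_le_mul_of_nonneg_left (hB k) ht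
    have htaylor := (abs_le.1 (Real.abs_exp_sub_one_sub_id_le (htu.trans htB))).2
    have hsq : (t * u k) ^ 2 ≤ (t * B) ^ 2 := sq_le_sq' (abs_le.1 htu).1 (abs_le.1 htu).2
    linarith
  calc ∑ k, T k * Real.exp (t * u k)
      ≤ ∑ k, T k * (1 + t * u k + (t * B) ^ 2) :=
        Finset.sum_le_sum fun k _ => mul_le_mul_of_nonneg_left (hexp k) (hT k)
    _ = t * ∑ k, T k * u k + (t * B) ^ 2 + 1 := by
        simp only [mul_add, Finset.sum_add_distrib, ← Finset.sum_mul, hT1, Finset.mul_sum,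
          mul_left_comm]
        ring
    _ ≤ _ := Real.add_one_le_exp _

lemma sum_pi_prod {ι R : Type*} [Fintype ι] [DecidableEq ι] [CommSemiring R] (f : ι → Ω → R) :
    ∑ ω : ι → Ω, ∏ i, f i (ω i) = ∏ i, ∑ k, f i k := by
  rw [Finset.prod_univ_sum, Fintype.piFinset_univ]

lemma sum_prod_tail_le {ι : Type*} [Fintype ι] [DecidableEq ι] {T u : ι → Ω → ℝ}
    (hT : ∀ i k, 0 ≤ T i k) (hT1 : ∀ i, ∑ k, T i k = 1) {B t c : ℝ} (hB : ∀ i k, |u i k| ≤ B)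
    (ht : 0 ≤ t) (htB : t * B ≤ 1) :
    ∑ ω : ι → Ω with c ≤ ∑ i, u i (ω i), ∏ i, T i (ω i) ≤
      Real.exp (t * ∑ i, ∑ k, T i k * u i k + Fintype.card ι * (t * B) ^ 2 - t * c) := by
  have htilt (ω : ι → Ω) : (∏ i, T i (ω i) * Real.exp (t * u i (ω i))) * Real.exp (-(t * c)) =
      (∏ i, T i (ω i)) * Real.exp (t * (∑ i, u i (ω i) - c)) := by
    rw [Finset.prod_mul_distrib, ← Real.exp_sum, mul_assoc, ← Real.exp_add, ← Finset.mul_sum]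
    ring_nf
  have hprod (ω : ι → Ω) : 0 ≤ ∏ i, T i (ω i) := Finset.prod_nonneg fun i _ => hT i _
  calc ∑ ω : ι → Ω with c ≤ ∑ i, u i (ω i), ∏ i, T i (ω i)
      ≤ ∑ ω : ι → Ω with c ≤ ∑ i, u i (ω i),
          (∏ i, T i (ω i) * Real.exp (t * u i (ω i))) * Real.exp (-(t * c)) := by
        refine Finset.sum_le_sum fun ω hω => ?_
        rw [htilt]
        refine le_mul_of_one_le_right (hprod ω) (Real.one_le_exp (mul_nonneg ht ?_))
        exact sub_nonneg.2 (Finset.mem_filter.1 hω).2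
    _ ≤ ∑ ω : ι → Ω, (∏ i, T i (ω i) * Real.exp (t * u i (ω i))) * Real.exp (-(t * c)) := by
        refine Finset.sum_le_sum_of_subset_of_nonneg (Finset.subset_univ _) fun ω _ _ => ?_
        rw [htilt]
        exact mul_nonneg (hprod ω) (Real.exp_pos _).le
    _ = (∏ i, ∑ k, T i k * Real.exp (t * u i k)) * Real.exp (-(t * c)) := by
        rw [← Finset.sum_mul, sum_pi_prod fun i k => T i k * Real.exp (t * u i k)]
    _ ≤ (∏ i, Real.exp (t * ∑ k, T i k * u i k + (t * B) ^ 2)) * Real.exp (-(t * c)) := by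
        refine mul_le_mul_of_nonneg_right (Finset.prod_le_prod (fun i _ => ?_) fun i _ => ?_)
          (Real.exp_pos _).le
        · exact Finset.sum_nonneg fun k _ => mul_nonneg (hT i k) (Real.exp_pos _).le
        · exact sum_mul_exp_le (hT i) (hT1 i) (hB i) ht htB
    _ = _ := by
        rw [← Real.exp_sum, ← Real.exp_add, Finset.sum_add_distrib, ← Finset.mul_sum,
          Finset.sum_const, Finset.card_univ, nsmul_eq_mul, ← sub_eq_add_neg]

lemma exists_forall_sum_prod_tail_le [Finite L] {T : L → Ω → ℝ} (u : L → Ω → ℝ)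
    (hT : ∀ l k, 0 ≤ T l k) (hT1 : ∀ l, ∑ k, T l k = 1) {η κ : ℝ} (hη : 0 < η) (hκ : 0 < κ) :
    ∃ n₀ : ℕ, ∀ n ≥ n₀, ∀ (ℓ : Fin n → L) (D : ℝ), ∑ i, ∑ k, T (ℓ i) k * u (ℓ i) k ≤ n * D →
      ∑ ω : Fin n → Ω with n * (D + η) ≤ ∑ i, u (ℓ i) (ω i), ∏ i, T (ℓ i) (ω i) ≤ κ := by
  obtain ⟨B, hB1, hB⟩ : ∃ B : ℝ, 1 ≤ B ∧ ∀ l k, |u l k| ≤ B := by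
    obtain ⟨B, hB⟩ := (Set.finite_range fun lk : L × Ω => |u lk.1 lk.2|).bddAbove
    exact ⟨max B 1, le_max_right _ _, fun l k => (hB ⟨(l, k), rfl⟩).trans (le_max_left _ _)⟩
  set t : ℝ := min (1 / B) (η / (2 * B ^ 2))
  have ht0 : 0 < t := by positivity
  have htB : t * B ≤ 1 := (le_div_iff₀ (by positivity)).1 (min_le_left _ _)
  have htB2 : (t * B) ^ 2 ≤ t * (η / 2) := by
    have : t * (2 * B ^ 2) ≤ η := (le_div_iff₀ (by positivity)).1 (min_le_right _ _)
    nlinarith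
  obtain ⟨n₀, hn₀⟩ := exists_nat_ge (-Real.log κ / (t * (η / 2)))
  refine ⟨n₀, fun n hn ℓ D hD => ?_⟩
  have hn' : -Real.log κ ≤ n * (t * (η / 2)) :=
    (div_le_iff₀ (by positivity)).1 (hn₀.trans (by exact_mod_cast hn))
  refine (sum_prod_tail_le (fun i => hT (ℓ i)) (fun i => hT1 (ℓ i)) (fun i => hB (ℓ i)) ht0.le
    htB).trans ?_
  rw [← Real.le_log_iff_exp_le hκ, Fintype.card_fin]
  have hmean := mul_le_mul_of_nonneg_left hD ht0.le
  have hvar := mul_le_mul_of_nonneg_left htB2 (Nat.cast_nonneg n)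
  linarith

lemma exists_forall_exists_typical [Finite L] {T : L → Ω → ℝ} (u v : L → Ω → ℝ)
    (hT : ∀ l k, 0 ≤ T l k) (hT1 : ∀ l, ∑ k, T l k = 1) {η : ℝ} (hη : 0 < η) :
    ∃ n₀ : ℕ, ∀ n ≥ n₀, ∀ (ℓ : Fin n → L) (D₁ D₂ : ℝ),
      ∑ i, ∑ k, T (ℓ i) k * u (ℓ i) k ≤ n * D₁ → ∑ i, ∑ k, T (ℓ i) k * v (ℓ i) k ≤ n * D₂ →
      ∃ G : Finset (Fin n → Ω), 1 / 2 ≤ ∑ ω ∈ G, ∏ i, T (ℓ i) (ω i) ∧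
        ∀ ω ∈ G, ∑ i, u (ℓ i) (ω i) ≤ n * (D₁ + η) ∧ ∑ i, v (ℓ i) (ω i) ≤ n * (D₂ + η) := by
  classical
  have hκ : (0 : ℝ) < 1 / 4 := by norm_num
  obtain ⟨n₁, hn₁⟩ := exists_forall_sum_prod_tail_le u hT hT1 hη hκ
  obtain ⟨n₂, hn₂⟩ := exists_forall_sum_prod_tail_le v hT hT1 hη hκ
  refine ⟨max n₁ n₂, fun n hn ℓ D₁ D₂ hu hv => ?_⟩
  have tail₁ := hn₁ n (le_of_max_le_left hn) ℓ D₁ hu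
  have tail₂ := hn₂ n (le_of_max_le_right hn) ℓ D₂ hv
  set G₁ : Finset (Fin n → Ω) := {ω | n * (D₁ + η) ≤ ∑ i, u (ℓ i) (ω i)} with hG₁
  set G₂ : Finset (Fin n → Ω) := {ω | n * (D₂ + η) ≤ ∑ i, v (ℓ i) (ω i)} with hG₂
  have total : ∑ ω : Fin n → Ω, ∏ i, T (ℓ i) (ω i) = 1 := by
    rw [sum_pi_prod fun i => T (ℓ i)]
    simp only [hT1, Finset.prod_const_one]
  have union : ∑ ω ∈ G₁ ∪ G₂, ∏ i, T (ℓ i) (ω i) ≤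
      ∑ ω ∈ G₁, ∏ i, T (ℓ i) (ω i) + ∑ ω ∈ G₂, ∏ i, T (ℓ i) (ω i) := by
    rw [← Finset.sum_union_inter]
    exact le_add_of_nonneg_right
      (Finset.sum_nonneg fun ω _ => Finset.prod_nonneg fun i _ => hT _ _)
  refine ⟨(G₁ ∪ G₂)ᶜ, ?_, fun ω hω => ?_⟩
  · have := Finset.sum_add_sum_compl (G₁ ∪ G₂) fun ω : Fin n → Ω => ∏ i, T (ℓ i) (ω i)
    linarith
  · simp only [Finset.mem_compl, Finset.mem_union, not_or, hG₁, hG₂, Finset.mem_filter,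
      Finset.mem_univ, true_and, not_le] at hω
    exact ⟨hω.1.le, hω.2.le⟩

lemma prod_mul_exp_neg_le {ι : Type*} [Fintype ι] {T u p : ι → ℝ} (hT : ∀ i, 0 ≤ T i)
    (hp : ∀ i, T i * Real.exp (-u i) = p i) {U : ℝ} (hU : ∑ i, u i ≤ U) :
    (∏ i, T i) * Real.exp (-U) ≤ ∏ i, p i := by
  simp only [← hp, Finset.prod_mul_distrib, ← Real.exp_sum, Finset.sum_neg_distrib]
  exact mul_le_mul_of_nonneg_left (Real.exp_le_exp.2 (neg_le_neg hU))
    (Finset.prod_nonneg fun i _ => hT i)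

lemma half_exp_le_sum_min {ι : Type*} [Fintype ι] [DecidableEq ι] {T u v p q : ι → Ω → ℝ}
    (hT : ∀ i k, 0 ≤ T i k) (hp : ∀ i k, T i k * Real.exp (-u i k) = p i k)
    (hq : ∀ i k, T i k * Real.exp (-v i k) = q i k) {U W : ℝ} {G : Finset (ι → Ω)}
    (hG : 1 / 2 ≤ ∑ ω ∈ G, ∏ i, T i (ω i))
    (hGuv : ∀ ω ∈ G, ∑ i, u i (ω i) ≤ U ∧ ∑ i, v i (ω i) ≤ W) :
    1 / 2 * Real.exp (-U) ≤
      ∑ ω : ι → Ω, min (∏ i, p i (ω i)) (Real.exp (W - U) * ∏ i, q i (ω i)) := by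
  have nonneg_of_eq {x y : ι → Ω → ℝ} (h : ∀ i k, T i k * Real.exp (-x i k) = y i k)
      (ω : ι → Ω) : 0 ≤ ∏ i, y i (ω i) :=
    Finset.prod_nonneg fun i _ => h i (ω i) ▸ mul_nonneg (hT _ _) (Real.exp_pos _).le
  calc 1 / 2 * Real.exp (-U) ≤ (∑ ω ∈ G, ∏ i, T i (ω i)) * Real.exp (-U) :=
        mul_le_mul_of_nonneg_right hG (Real.exp_pos _).le
    _ = ∑ ω ∈ G, (∏ i, T i (ω i)) * Real.exp (-U) := Finset.sum_mul ..
    _ ≤ ∑ ω ∈ G, min (∏ i, p i (ω i)) (Real.exp (W - U) * ∏ i, q i (ω i)) := by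
        refine Finset.sum_le_sum fun ω hω => le_min ?_ ?_
        · exact prod_mul_exp_neg_le (fun i => hT i _) (fun i => hp i _) (hGuv ω hω).1
        · refine le_trans (le_of_eq ?_) (mul_le_mul_of_nonneg_left (prod_mul_exp_neg_le
            (fun i => hT i _) (fun i => hq i _) (hGuv ω hω).2) (Real.exp_pos _).le)
          rw [mul_left_comm, ← Real.exp_add]
          ring_nf
    _ ≤ _ := Finset.sum_le_sum_of_subset_of_nonneg (Finset.subset_univ _) fun ω _ _ =>
        le_min (nonneg_of_eq hp ω) (mul_nonneg (Real.exp_pos _).le (nonneg_of_eq hq ω))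

theorem exists_forall_half_exp_le_sum_min [Fintype L] {p b : L → Ω → ℝ} {w : L → ℝ}
    (hp : ∀ l k, 0 ≤ p l k) (hp0 : ∀ l, 0 < ∑ k, p l k) {E R η : ℝ} (hη : 0 < η)
    (h : ∀ s ∈ Set.Icc (0 : ℝ) 1,
      -(s * R + (1 - s) * E) ≤ ∑ l, w l * Real.log (partitionFn (p l) (b l) s)) :
    ∃ D₁ D₂ : L → ℝ, ∑ l, w l * D₁ l ≤ E ∧ ∑ l, w l * D₂ l ≤ R ∧
      ∃ n₀ : ℕ, ∀ n ≥ n₀, ∀ (ℓ : Fin n → L) (d₁ d₂ : ℝ),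
        ∑ i, D₁ (ℓ i) ≤ n * d₁ → ∑ i, D₂ (ℓ i) ≤ n * d₂ →
        1 / 2 * Real.exp (-(n * (d₁ + η))) ≤ ∑ ω : Fin n → Ω, min (∏ i, p (ℓ i) (ω i))
          (Real.exp (n * (d₂ - d₁)) * ∏ i, p (ℓ i) (ω i) * Real.exp (b (ℓ i) (ω i))) := by
  obtain ⟨s, hD₁, hD₂⟩ := exists_sum_tiltDivergence_le hp hp0 h
  refine ⟨fun l => tiltDivergence (p l) (b l) s 0, fun l => tiltDivergence (p l) (b l) s 1,
    hD₁, hD₂, ?_⟩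
  have hT (l : L) (k : Ω) : 0 ≤ tilt (p l) (b l) s k := tilt_nonneg (hp l) s k
  obtain ⟨n₀, hn₀⟩ := exists_forall_exists_typical (fun l => tiltLogRatio (p l) (b l) s 0)
    (fun l => tiltLogRatio (p l) (b l) s 1) hT (fun l => sum_tilt (hp l) (hp0 l) s) hη
  refine ⟨n₀, fun n hn ℓ d₁ d₂ h₁ h₂ => ?_⟩
  obtain ⟨G, hG, hGuv⟩ := hn₀ n hn ℓ d₁ d₂ h₁ h₂
  have hp' (l : L) (k : Ω) : _ = p l k :=
    (tilt_mul_exp_neg_tiltLogRatio (b := b l) (hp l) (hp0 l) s 0 k).trans (by simp)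
  have hq' (l : L) (k : Ω) : _ = p l k * Real.exp (b l k) :=
    (tilt_mul_exp_neg_tiltLogRatio (hp l) (hp0 l) s 1 k).trans (by rw [one_mul])
  convert half_exp_le_sum_min (fun i => hT (ℓ i)) (fun i => hp' (ℓ i)) (fun i => hq' (ℓ i)) hG hGuv
    using 5
  ring

end Concentration

/-! ### Powers of positive matrices -/

section MatrixPowers

open Matrix
open scoped MatrixOrder Matrix.Norms.L2Operator

variable {ι : Type*}

lemma convex_setOf_posDef : Convex ℝ {F : Matrix ι ι ℂ | F.PosDef} :=
  convex_iff_forall_pos.2 fun _ hF _ hG _ _ ha hb _ => (hF.smul ha).add (hG.smul hb)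

variable [Fintype ι]

lemma mul_star_self_apply_diag (M : Matrix ι ι ℂ) (i : ι) :
    (M * star M) i i = ((∑ j, Complex.normSq (M i j) : ℝ) : ℂ) := by
  simp only [Matrix.mul_apply, Matrix.star_apply, Complex.star_def, Complex.mul_conj,
    Complex.ofReal_sum]

lemma re_trace_mul_nonneg {S F : Matrix ι ι ℂ} (hS : S.PosSemidef)
    (hF : F.PosSemidef) : 0 ≤ (S * F).trace.re := by
  classical
  obtain ⟨C, rfl⟩ := CStarAlgebra.nonneg_iff_eq_star_mul_self.mp hS.nonneg
  rw [mul_assoc, Matrix.trace_mul_comm]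
  exact (Complex.le_def.1 (hF.mul_mul_conjTranspose_same C).trace_nonneg).1

variable [DecidableEq ι]

/-- The real power with the convention `0 ^ r = 0` for every `r`, by which `mpow` transforms the
eigenvalues. -/
def supportRpow (x r : ℝ) : ℝ := if x = 0 then 0 else x ^ r

/-- The matrix with real eigenvalues `x` and, when `U` is unitary, the columns of `U` as
eigenvectors. -/
def conjDiagonal (U : Matrix ι ι ℂ) (x : ι → ℝ) : Matrix ι ι ℂ :=
  U * diagonal (fun i => (x i : ℂ)) * star U

variable {S F U : Matrix ι ι ℂ}

lemma supportRpow_nonneg {x : ℝ} (hx : 0 ≤ x) (r : ℝ) : 0 ≤ supportRpow x r := by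
  unfold supportRpow
  split_ifs
  exacts [le_rfl, Real.rpow_nonneg hx r]

lemma supportRpow_eq_rpow {r : ℝ} (hr : r ≠ 0) (x : ℝ) : supportRpow x r = x ^ r := by
  unfold supportRpow
  split_ifs with hx
  · rw [hx, Real.zero_rpow hr]
  · rfl

lemma supportRpow_of_ne_zero {x : ℝ} (hx : x ≠ 0) (r : ℝ) : supportRpow x r = x ^ r := if_neg hx

lemma posSemidef_conjDiagonal {x : ι → ℝ} (hx : ∀ i, 0 ≤ x i) :
    (conjDiagonal U x).PosSemidef :=
  (PosSemidef.diagonal fun i => by simpa using hx i).mul_mul_conjTranspose_same U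

lemma trace_mul_conjDiagonal (Q U : Matrix ι ι ℂ) (x : ι → ℝ) :
    (Q * conjDiagonal U x).trace.re = ∑ i, x i * ((star U * Q * U) i i).re := by
  have cyclic : (Q * conjDiagonal U x).trace =
      ((star U * Q * U) * diagonal (fun i => (x i : ℂ))).trace := by
    rw [conjDiagonal, ← Matrix.mul_assoc, Matrix.trace_mul_comm]
    simp only [Matrix.mul_assoc]
  rw [cyclic, Matrix.trace, Complex.re_sum]
  exact Finset.sum_congr rfl fun i _ => by simp [Matrix.mul_diagonal, mul_comm]

lemma conjDiagonal_conj_apply_diag (U W : Matrix ι ι ℂ) (x : ι → ℝ) (j : ι) :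
    ((star W * conjDiagonal U x * W) j j).re =
      ∑ i, x i * Complex.normSq ((star U * W) i j) := by
  have factor : star W * conjDiagonal U x * W =
      star (star U * W) * (diagonal (fun i => (x i : ℂ)) * (star U * W)) := by
    simp only [conjDiagonal, star_mul, star_star, Matrix.mul_assoc]
  rw [factor, Matrix.mul_apply, Complex.re_sum]
  refine Finset.sum_congr rfl fun i _ => ?_
  rw [Matrix.diagonal_mul, Matrix.star_apply, Complex.star_def, mul_left_comm,
    mul_comm (starRingEnd ℂ _), Complex.mul_conj, ← Complex.ofReal_mul, Complex.ofReal_re]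

lemma trace_conjDiagonal_mul_conjDiagonal (U W : Matrix ι ι ℂ) (x y : ι → ℝ) :
    (conjDiagonal U x * conjDiagonal W y).trace.re =
      ∑ k : ι × ι, x k.1 * y k.2 * Complex.normSq ((star U * W) k.1 k.2) := by
  simp only [trace_mul_conjDiagonal, conjDiagonal_conj_apply_diag, Finset.mul_sum,
    Fintype.sum_prod_type_right]
  exact Finset.sum_congr rfl fun j _ => Finset.sum_congr rfl fun i _ => by ring

lemma eq_conjDiagonal (hS : S.IsHermitian) :
    S = conjDiagonal hS.eigenvectorUnitary hS.eigenvalues :=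
  hS.spectral_theorem

lemma mpow_eq_conjDiagonal (hS : S.IsHermitian) (r : ℝ) :
    mpow S r = conjDiagonal hS.eigenvectorUnitary fun i => supportRpow (hS.eigenvalues i) r :=
  dif_pos hS

lemma posSemidef_mpow (hS : S.PosSemidef) (r : ℝ) : (mpow S r).PosSemidef := by
  rw [mpow_eq_conjDiagonal hS.1]
  exact posSemidef_conjDiagonal fun i => supportRpow_nonneg (hS.eigenvalues_nonneg i) r

lemma mpow_eq_rpow_of_forall (hF : F.PosSemidef) {s : ℝ}
    (h : ∀ i, supportRpow (hF.1.eigenvalues i) s = hF.1.eigenvalues i ^ s) : mpow F s = F ^ s := by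
  rw [CFC.rpow_eq_cfc_real (ha := hF.nonneg), hF.1.cfc_eq, mpow_eq_conjDiagonal hF.1]
  simp only [h]
  rfl

lemma mpow_eq_rpow (hF : F.PosSemidef) {s : ℝ} (hs : s ≠ 0) : mpow F s = F ^ s :=
  mpow_eq_rpow_of_forall hF fun _ => supportRpow_eq_rpow hs _

lemma mpow_eq_rpow_of_posDef (hF : F.PosDef) (s : ℝ) : mpow F s = F ^ s :=
  mpow_eq_rpow_of_forall hF.posSemidef fun i => supportRpow_of_ne_zero (hF.eigenvalues_pos i).ne' s

lemma concaveOn_trace_mul_rpow (hS : S.PosSemidef) {s : ℝ} (hs : s ∈ Set.Icc (0 : ℝ) 1) :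
    ConcaveOn ℝ {F : Matrix ι ι ℂ | F.PosSemidef} fun F => (S * F ^ s).trace.re := by
  refine ⟨fun F hF G hG a b ha hb _ => (hF.smul ha).add (hG.smul hb),
    fun F hF G hG a b ha hb hab => ?_⟩
  have operatorConcave := (CFC.concaveOn_rpow (A := Matrix ι ι ℂ) hs).2
    (Set.mem_Ici.2 hF.nonneg) (Set.mem_Ici.2 hG.nonneg) ha hb hab
  have gap := re_trace_mul_nonneg hS (Matrix.le_iff.1 operatorConcave)
  simp only [mul_sub, mul_add, Matrix.trace_sub, Matrix.trace_add, Matrix.mul_smul,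
    Matrix.trace_smul, Complex.sub_re, Complex.add_re, Complex.smul_re] at gap
  linarith

lemma continuousOn_trace_mul_rpow (S : Matrix ι ι ℂ) (s : ℝ) :
    ContinuousOn (fun F : Matrix ι ι ℂ => (S * F ^ s).trace.re) {F | F.PosDef} := by
  have rpow_continuous : ContinuousOn (fun F : Matrix ι ι ℂ => F ^ s) {F | F.PosDef} :=
    (CFC.continuousOn_rpow (A := Matrix ι ι ℂ) s).mono fun F hF =>
      Matrix.isStrictlyPositive_iff_posDef.2 hF
  have functional_continuous : Continuous fun G : Matrix ι ι ℂ => (S * G).trace.re := by fun_prop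
  exact functional_continuous.comp_continuousOn rpow_continuous

end MatrixPowers

/-! ### The Nussbaum–Szkoła distributions -/

section NussbaumSzkola

open Matrix

variable {ι : Type*} [Fintype ι] [DecidableEq ι] {S F : Matrix ι ι ℂ}

/-- The squared overlaps of the eigenvectors of `S` with those of `F`. -/
def eigenOverlap (hS : S.IsHermitian) (hF : F.IsHermitian) (k : ι × ι) : ℝ :=
  Complex.normSq ((star (hS.eigenvectorUnitary : Matrix ι ι ℂ) * hF.eigenvectorUnitary) k.1 k.2)

/-- The first Nussbaum–Szkoła distribution: the eigenvalues of `S` spread over pairs of eigenvectors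
by the overlaps. It plays the role of `S` in the classical hypothesis test replacing `S` against
`F`. -/
def nsLeft (hS : S.IsHermitian) (hF : F.IsHermitian) (k : ι × ι) : ℝ :=
  hS.eigenvalues k.1 * eigenOverlap hS hF k

/-- The second Nussbaum–Szkoła distribution, which plays the role of `F`. -/
def nsRight (hS : S.IsHermitian) (hF : F.IsHermitian) (k : ι × ι) : ℝ :=
  hF.eigenvalues k.2 * eigenOverlap hS hF k

/-- The log-likelihood ratio of `nsRight` against `nsLeft`, meaningful where both eigenvalues are
positive. -/
def nsLogRatio (hS : S.IsHermitian) (hF : F.IsHermitian) (k : ι × ι) : ℝ :=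
  Real.log (hF.eigenvalues k.2) - Real.log (hS.eigenvalues k.1)

/-- The trace `Tr (S ^ (1 - s) F ^ s)` defining the Petz–Rényi divergences; with
`s = ρ / (1 + ρ)` it is the trace appearing in `E0cc`. -/
def petzTrace (S F : Matrix ι ι ℂ) (s : ℝ) : ℝ := (mpow S (1 - s) * mpow F s).trace.re

lemma eigenOverlap_nonneg (hS : S.IsHermitian) (hF : F.IsHermitian) (k : ι × ι) :
    0 ≤ eigenOverlap hS hF k :=
  Complex.normSq_nonneg _

lemma eigenOverlap_comm (hS : S.IsHermitian) (hF : F.IsHermitian) (i j : ι) :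
    eigenOverlap hS hF (i, j) = eigenOverlap hF hS (j, i) := by
  have adjoint : star (hF.eigenvectorUnitary : Matrix ι ι ℂ) * hS.eigenvectorUnitary =
      star (star (hS.eigenvectorUnitary : Matrix ι ι ℂ) * hF.eigenvectorUnitary) := by
    rw [star_mul, star_star]
  rw [eigenOverlap, eigenOverlap, adjoint, Matrix.star_apply, Complex.star_def, Complex.normSq_conj]

lemma sum_eigenOverlap_right (hS : S.IsHermitian) (hF : F.IsHermitian) (i : ι) :
    ∑ j, eigenOverlap hS hF (i, j) = 1 := by
  have unitary : star (hS.eigenvectorUnitary : Matrix ι ι ℂ) * hF.eigenvectorUnitary *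
      star (star (hS.eigenvectorUnitary : Matrix ι ι ℂ) * hF.eigenvectorUnitary) = 1 :=
    Unitary.coe_mul_star_self (star hS.eigenvectorUnitary * hF.eigenvectorUnitary)
  have entry := congrFun (congrFun unitary i) i
  rw [mul_star_self_apply_diag, Matrix.one_apply_eq] at entry
  exact_mod_cast entry

lemma sum_eigenOverlap_left (hS : S.IsHermitian) (hF : F.IsHermitian) (j : ι) :
    ∑ i, eigenOverlap hS hF (i, j) = 1 := by
  simp only [eigenOverlap_comm hS hF, sum_eigenOverlap_right hF hS j]

lemma sum_eigenvalues (hS : S.IsHermitian) : ∑ i, hS.eigenvalues i = S.trace.re := by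
  rw [hS.trace_eq_sum_eigenvalues, Complex.re_sum]
  rfl

lemma sum_nsLeft (hS : S.IsHermitian) (hF : F.IsHermitian) :
    ∑ k, nsLeft hS hF k = S.trace.re := by
  simp only [nsLeft, Fintype.sum_prod_type, ← Finset.mul_sum, sum_eigenOverlap_right, mul_one,
    sum_eigenvalues]

lemma sum_nsRight (hS : S.IsHermitian) (hF : F.IsHermitian) :
    ∑ k, nsRight hS hF k = F.trace.re := by
  simp only [nsRight, Fintype.sum_prod_type_right, ← Finset.mul_sum, sum_eigenOverlap_left,
    mul_one, sum_eigenvalues]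

lemma nsLeft_nonneg (hS : S.PosSemidef) (hF : F.IsHermitian) (k : ι × ι) :
    0 ≤ nsLeft hS.1 hF k :=
  mul_nonneg (hS.eigenvalues_nonneg _) (eigenOverlap_nonneg _ _ _)

lemma nsRight_nonneg (hS : S.IsHermitian) (hF : F.PosSemidef) (k : ι × ι) :
    0 ≤ nsRight hS hF.1 k :=
  mul_nonneg (hF.eigenvalues_nonneg _) (eigenOverlap_nonneg _ _ _)

-- Only an inequality: `nsLeft` vanishes on the kernel of `S`, where `nsRight` need not.
lemma nsLeft_mul_exp_nsLogRatio_le (hS : S.PosSemidef) (hF : F.PosDef) (k : ι × ι) :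
    nsLeft hS.1 hF.1 k * Real.exp (nsLogRatio hS.1 hF.1 k) ≤ nsRight hS.1 hF.1 k := by
  rcases (hS.eigenvalues_nonneg k.1).eq_or_lt with hzero | hpos
  · rw [nsLeft, ← hzero, zero_mul, zero_mul]
    exact nsRight_nonneg hS.1 hF.posSemidef k
  · rw [nsLeft, nsRight, nsLogRatio, Real.exp_sub, Real.exp_log hpos,
      Real.exp_log (hF.eigenvalues_pos _)]
    field_simp
    exact le_rfl

lemma petzTrace_eq_sum (hS : S.IsHermitian) (hF : F.IsHermitian) (s : ℝ) :
    petzTrace S F s = ∑ k : ι × ι, supportRpow (hS.eigenvalues k.1) (1 - s) *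
      supportRpow (hF.eigenvalues k.2) s * eigenOverlap hS hF k := by
  rw [petzTrace, mpow_eq_conjDiagonal hS, mpow_eq_conjDiagonal hF,
    trace_conjDiagonal_mul_conjDiagonal]
  rfl

lemma petzTrace_eq_partitionFn (hS : S.PosSemidef) (hF : F.PosDef) (s : ℝ) :
    petzTrace S F s = partitionFn (nsLeft hS.1 hF.1) (nsLogRatio hS.1 hF.1) s := by
  rw [petzTrace_eq_sum hS.1 hF.1, partitionFn]
  refine Finset.sum_congr rfl fun k _ => ?_
  have hμ := hF.eigenvalues_pos k.2
  rcases (hS.eigenvalues_nonneg k.1).eq_or_lt with hzero | hpos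
  · simp [nsLeft, supportRpow, ← hzero]
  · rw [supportRpow_of_ne_zero hpos.ne', supportRpow_of_ne_zero hμ.ne', nsLeft, nsLogRatio,
      Real.rpow_sub hpos, Real.rpow_one, mul_sub, Real.exp_sub, Real.rpow_def_of_pos hpos,
      Real.rpow_def_of_pos hμ, mul_comm s, mul_comm s]
    ring

lemma petzTrace_le_one (hS : IsDensity S) (hF : IsDensity F) {s : ℝ}
    (hs : s ∈ Set.Ioo (0 : ℝ) 1) : petzTrace S F s ≤ 1 := by
  have termwise (k : ι × ι) : supportRpow (hS.1.1.eigenvalues k.1) (1 - s) *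
      supportRpow (hF.1.1.eigenvalues k.2) s * eigenOverlap hS.1.1 hF.1.1 k ≤
      (1 - s) * nsLeft hS.1.1 hF.1.1 k + s * nsRight hS.1.1 hF.1.1 k := by
    rw [supportRpow_eq_rpow (sub_pos.2 hs.2).ne', supportRpow_eq_rpow hs.1.ne']
    have amgm := Real.geom_mean_le_arith_mean2_weighted (sub_pos.2 hs.2).le hs.1.le
      (hS.1.eigenvalues_nonneg k.1) (hF.1.eigenvalues_nonneg k.2) (sub_add_cancel 1 s)
    refine (mul_le_mul_of_nonneg_right amgm (eigenOverlap_nonneg hS.1.1 hF.1.1 k)).trans_eq ?_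
    rw [nsLeft, nsRight]
    ring
  calc petzTrace S F s
      ≤ ∑ k, ((1 - s) * nsLeft hS.1.1 hF.1.1 k + s * nsRight hS.1.1 hF.1.1 k) :=
        (petzTrace_eq_sum hS.1.1 hF.1.1 s).trans_le (Finset.sum_le_sum fun k _ => termwise k)
    _ = 1 := by
        rw [Finset.sum_add_distrib, ← Finset.mul_sum, ← Finset.mul_sum, sum_nsLeft, sum_nsRight,
          hS.2, hF.2, Complex.one_re]
        ring

lemma sum_nsLeft_pos (hS : IsDensity S) (hF : F.IsHermitian) :
    0 < ∑ k, nsLeft hS.1.1 hF k := by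
  rw [sum_nsLeft, hS.2, Complex.one_re]
  exact one_pos

lemma petzTrace_pos (hS : IsDensity S) (hF : F.PosDef) (s : ℝ) : 0 < petzTrace S F s := by
  rw [petzTrace_eq_partitionFn hS.1 hF]
  exact partitionFn_pos (nsLeft_nonneg hS.1 hF.1) (sum_nsLeft_pos hS hF.1) s

lemma convexOn_log_petzTrace (hS : IsDensity S) (hF : F.PosDef) :
    ConvexOn ℝ Set.univ fun s => Real.log (petzTrace S F s) := by
  simp only [petzTrace_eq_partitionFn hS.1 hF]
  exact convexOn_log_partitionFn (nsLeft_nonneg hS.1 hF.1) (sum_nsLeft_pos hS hF.1)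

lemma continuous_log_petzTrace (hS : IsDensity S) (hF : F.PosDef) :
    Continuous fun s => Real.log (petzTrace S F s) :=
  continuousOn_univ.1 ((convexOn_log_petzTrace hS hF).continuousOn isOpen_univ)

lemma concaveOn_petzTrace (hS : S.PosSemidef) {s : ℝ} (hs : s ∈ Set.Icc (0 : ℝ) 1) :
    ConcaveOn ℝ {F : Matrix ι ι ℂ | F.PosDef} fun F => petzTrace S F s :=
  ((concaveOn_trace_mul_rpow (posSemidef_mpow hS (1 - s)) hs).subset
    (fun _ hF => hF.posSemidef) convex_setOf_posDef).congr fun F hF => by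
      rw [petzTrace, mpow_eq_rpow_of_posDef hF]

lemma concaveOn_log_petzTrace (hS : IsDensity S) {s : ℝ} (hs : s ∈ Set.Icc (0 : ℝ) 1) :
    ConcaveOn ℝ {F : Matrix ι ι ℂ | F.PosDef} fun F => Real.log (petzTrace S F s) := by
  refine ⟨convex_setOf_posDef, fun F hF G hG a b ha hb hab => ?_⟩
  have hF0 := petzTrace_pos hS hF s
  have hG0 := petzTrace_pos hS hG s
  exact (strictConcaveOn_log_Ioi.concaveOn.2 hF0 hG0 ha hb hab).trans <| Real.log_le_log
    (convex_Ioi (0 : ℝ) hF0 hG0 ha hb hab) ((concaveOn_petzTrace hS.1 hs).2 hF hG ha hb hab)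

lemma continuousOn_log_petzTrace (hS : IsDensity S) (s : ℝ) :
    ContinuousOn (fun F : Matrix ι ι ℂ => Real.log (petzTrace S F s)) {F | F.PosDef} := by
  refine ContinuousOn.log ?_ fun F hF => (petzTrace_pos hS hF s).ne'
  exact (continuousOn_trace_mul_rpow (mpow S (1 - s)) s).congr fun F hF => by
    rw [petzTrace, mpow_eq_rpow_of_posDef hF]

end NussbaumSzkola

/-! ### Tensor products of matrices -/

section MatrixTensor

open Matrix

variable {κ ι R : Type*} [Fintype κ] [CommSemiring R]

/-- The tensor product of the matrices `M k`, indexed by tuples. -/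
def matrixTensor (M : κ → Matrix ι ι R) : Matrix (κ → ι) (κ → ι) R :=
  Matrix.of fun i j => ∏ k, M k (i k) (j k)

lemma star_matrixTensor [StarRing R] (M : κ → Matrix ι ι R) :
    star (matrixTensor M) = matrixTensor fun k => star (M k) := by
  ext i j
  simp [matrixTensor, Matrix.star_apply]

lemma matrixTensor_diagonal [DecidableEq ι] (x : κ → ι → R) :
    matrixTensor (fun k => diagonal (x k)) = diagonal fun i => ∏ k, x k (i k) := by
  ext i j
  rcases eq_or_ne i j with rfl | hne
  · simp [matrixTensor]
  · obtain ⟨k, hk⟩ := Function.ne_iff.1 hne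
    rw [diagonal_apply_ne _ hne]
    exact Finset.prod_eq_zero (Finset.mem_univ k) (diagonal_apply_ne _ hk)

lemma matrixTensor_one [DecidableEq ι] :
    matrixTensor (fun _ : κ => (1 : Matrix ι ι R)) = 1 := by
  simpa using matrixTensor_diagonal (κ := κ) (ι := ι) (R := R) fun _ _ => 1

lemma matrixTensor_mul [DecidableEq κ] [Fintype ι] (M N : κ → Matrix ι ι R) :
    matrixTensor M * matrixTensor N = matrixTensor fun k => M k * N k := by
  ext i j
  simp only [matrixTensor, Matrix.mul_apply, Matrix.of_apply, ← Finset.prod_mul_distrib,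
    sum_pi_prod fun k l => M k (i k) l * N k l (j k)]

open scoped MatrixOrder Matrix.Norms.L2Operator in
lemma posSemidef_matrixTensor [Finite ι] {M : κ → Matrix ι ι ℂ} (hM : ∀ k, (M k).PosSemidef) :
    (matrixTensor M).PosSemidef := by
  classical
  have := Fintype.ofFinite ι
  choose B hB using fun k => CStarAlgebra.nonneg_iff_eq_star_mul_self.mp (hM k).nonneg
  have factor : matrixTensor M = (matrixTensor B)ᴴ * matrixTensor B := by
    rw [← Matrix.star_eq_conjTranspose, star_matrixTensor, matrixTensor_mul]
    exact congrArg matrixTensor (funext hB)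
  rw [factor]
  exact posSemidef_conjTranspose_mul_self _

variable [DecidableEq κ] [Fintype ι]

lemma trace_matrixTensor (M : κ → Matrix ι ι R) :
    (matrixTensor M).trace = ∏ k, (M k).trace :=
  sum_pi_prod fun k i => M k i i

variable [DecidableEq ι]

lemma isDensity_matrixTensor {M : κ → Matrix ι ι ℂ} (hM : ∀ k, IsDensity (M k)) :
    IsDensity (matrixTensor M) :=
  ⟨posSemidef_matrixTensor fun k => (hM k).1, by
    rw [trace_matrixTensor, Finset.prod_eq_one fun k _ => (hM k).2]⟩

lemma matrixTensor_mul_star_self {U : κ → Matrix ι ι ℂ} (hU : ∀ k, U k * star (U k) = 1) :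
    matrixTensor U * star (matrixTensor U) = 1 := by
  simp only [star_matrixTensor, matrixTensor_mul, hU, matrixTensor_one]

lemma matrixTensor_conjDiagonal (U : κ → Matrix ι ι ℂ) (x : κ → ι → ℝ) :
    matrixTensor (fun k => conjDiagonal (U k) (x k)) =
      conjDiagonal (matrixTensor U) fun i => ∏ k, x k (i k) := by
  simp only [conjDiagonal, Complex.ofReal_prod]
  rw [← matrixTensor_diagonal fun k i => (x k i : ℂ), star_matrixTensor, matrixTensor_mul,
    matrixTensor_mul]

end MatrixTensor

/-! ### Quantum hypothesis testing -/

section HypothesisTesting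

open Matrix

variable {ι : Type*} [Fintype ι] [DecidableEq ι] {Q U W : Matrix ι ι ℂ}

lemma posSemidef_sub_mul_self (hQ : Q.PosSemidef) (hQ1 : (1 - Q).PosSemidef) :
    (Q - Q * Q).PosSemidef := by
  have sum_psd := (hQ1.mul_mul_conjTranspose_same Q).add (hQ.mul_mul_conjTranspose_same (1 - Q))
  rw [hQ.1.eq, hQ1.1.eq] at sum_psd
  convert sum_psd using 1
  noncomm_ring

lemma sum_normSq_conj_le (hQ : Q.PosSemidef) (hQ1 : (1 - Q).PosSemidef) (hW : W * star W = 1)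
    (i : ι) : ∑ j, Complex.normSq ((star U * Q * W) i j) ≤ ((star U * Q * U) i i).re := by
  have square : star U * (Q * Q) * U = (star U * Q * W) * star (star U * Q * W) := by
    have hQ_star : star Q = Q := hQ.1
    calc star U * (Q * Q) * U = star U * Q * (W * star W) * Q * U := by rw [hW]; noncomm_ring
      _ = (star U * Q * W) * star (star U * Q * W) := by
        simp only [star_mul, star_star, hQ_star, Matrix.mul_assoc]
  have gap := ((posSemidef_sub_mul_self hQ hQ1).conjTranspose_mul_mul_same U).diag_nonneg (i := i)
  rw [← Matrix.star_eq_conjTranspose, Matrix.mul_sub, Matrix.sub_mul, Matrix.sub_apply, square,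
    mul_star_self_apply_diag] at gap
  simpa using (Complex.le_def.1 gap).1

lemma normSq_add_le (z w : ℂ) :
    Complex.normSq (z + w) ≤ 2 * (Complex.normSq z + Complex.normSq w) := by
  simp only [Complex.normSq_eq_norm_sq]
  exact (pow_le_pow_left₀ (norm_nonneg _) (norm_add_le z w) 2).trans add_sq_le

lemma min_mul_normSq_add_le {x y : ℝ} (hx : 0 ≤ x) (hy : 0 ≤ y) (z w : ℂ) :
    1 / 2 * (min x y * Complex.normSq (z + w)) ≤ x * Complex.normSq z + y * Complex.normSq w := by
  have hz := mul_le_mul_of_nonneg_right (min_le_left x y) (Complex.normSq_nonneg z)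
  have hw := mul_le_mul_of_nonneg_right (min_le_right x y) (Complex.normSq_nonneg w)
  have hzw := mul_le_mul_of_nonneg_left (normSq_add_le z w) (le_min hx hy)
  linarith

-- The amplitude `(U* W) i j` splits as `(U* (1 - Q) W) i j + (U* Q W) i j`, so one of the two
-- errors of the test carries at least a fixed share of every overlap.
lemma half_sum_min_mul_normSq_le (hQ : Q.PosSemidef) (hQ1 : (1 - Q).PosSemidef)
    (hU : U * star U = 1) (hW : W * star W = 1) {x y : ι → ℝ} (hx : ∀ i, 0 ≤ x i)
    (hy : ∀ j, 0 ≤ y j) :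
    1 / 2 * ∑ i, ∑ j, min (x i) (y j) * Complex.normSq ((star U * W) i j) ≤
      ((1 - Q) * conjDiagonal U x).trace.re + (Q * conjDiagonal W y).trace.re := by
  have split (i j : ι) : (star U * W) i j = (star U * (1 - Q) * W) i j + (star U * Q * W) i j := by
    rw [← Matrix.add_apply, ← Matrix.add_mul, ← Matrix.mul_add, sub_add_cancel, Matrix.mul_one]
  have adjoint (i j : ι) :
      Complex.normSq ((star U * Q * W) i j) = Complex.normSq ((star W * Q * U) j i) := by
    have hQ_star : star Q = Q := hQ.1
    rw [← Complex.normSq_conj, ← Complex.star_def, ← Matrix.star_apply]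
    simp only [star_mul, star_star, hQ_star, Matrix.mul_assoc]
  have first_error : ∑ i, ∑ j, x i * Complex.normSq ((star U * (1 - Q) * W) i j) ≤
      ((1 - Q) * conjDiagonal U x).trace.re := by
    simp only [trace_mul_conjDiagonal, ← Finset.mul_sum]
    exact Finset.sum_le_sum fun i _ => mul_le_mul_of_nonneg_left
      (sum_normSq_conj_le hQ1 (by simpa using hQ) hW i) (hx i)
  have second_error : ∑ i, ∑ j, y j * Complex.normSq ((star U * Q * W) i j) ≤
      (Q * conjDiagonal W y).trace.re := by
    rw [Finset.sum_comm]
    simp only [trace_mul_conjDiagonal, adjoint, ← Finset.mul_sum]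
    exact Finset.sum_le_sum fun j _ => mul_le_mul_of_nonneg_left
      (sum_normSq_conj_le hQ hQ1 hU j) (hy j)
  refine le_trans ?_ (add_le_add first_error second_error)
  simp only [Finset.mul_sum, ← Finset.sum_add_distrib, split]
  exact Finset.sum_le_sum fun i _ => Finset.sum_le_sum fun j _ =>
    min_mul_normSq_add_le (hx i) (hy j) _ _

variable {κ : Type*} [Fintype κ] [DecidableEq κ]

lemma normSq_star_matrixTensor_mul {S F : κ → Matrix ι ι ℂ} (hS : ∀ k, (S k).IsHermitian)
    (hF : ∀ k, (F k).IsHermitian) (ω : κ → ι × ι) :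
    Complex.normSq ((star (matrixTensor fun k => ((hS k).eigenvectorUnitary : Matrix ι ι ℂ)) *
        matrixTensor fun k => ((hF k).eigenvectorUnitary : Matrix ι ι ℂ))
        (fun k => (ω k).1) fun k => (ω k).2) =
      ∏ k, eigenOverlap (hS k) (hF k) (ω k) := by
  rw [star_matrixTensor, matrixTensor_mul]
  exact map_prod Complex.normSq _ _

lemma matrixTensor_eq_conjDiagonal {S : κ → Matrix ι ι ℂ} (hS : ∀ k, (S k).IsHermitian) :
    matrixTensor S = conjDiagonal
      (matrixTensor fun k => ((hS k).eigenvectorUnitary : Matrix ι ι ℂ))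
      fun i => ∏ k, (hS k).eigenvalues (i k) := by
  rw [← matrixTensor_conjDiagonal]
  exact congrArg matrixTensor (funext fun k => eq_conjDiagonal (hS k))

lemma half_sum_min_prod_ns_le {S F : κ → Matrix ι ι ℂ} (hS : ∀ k, (S k).PosSemidef)
    (hF : ∀ k, (F k).PosSemidef) {Q : Matrix (κ → ι) (κ → ι) ℂ} (hQ : Q.PosSemidef)
    (hQ1 : (1 - Q).PosSemidef) {c : ℝ} (hc : 0 ≤ c) :
    1 / 2 * ∑ ω : κ → ι × ι, min (∏ k, nsLeft (hS k).1 (hF k).1 (ω k))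
        (c * ∏ k, nsRight (hS k).1 (hF k).1 (ω k)) ≤
      ((1 - Q) * matrixTensor S).trace.re + c * (Q * matrixTensor F).trace.re := by
  have test := half_sum_min_mul_normSq_le hQ hQ1
    (matrixTensor_mul_star_self fun k => Unitary.coe_mul_star_self (hS k).1.eigenvectorUnitary)
    (matrixTensor_mul_star_self fun k => Unitary.coe_mul_star_self (hF k).1.eigenvectorUnitary)
    (x := fun i => ∏ k, (hS k).1.eigenvalues (i k))
    (y := fun j => c * ∏ k, (hF k).1.eigenvalues (j k))
    (fun i => Finset.prod_nonneg fun k _ => (hS k).eigenvalues_nonneg _)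
    (fun j => mul_nonneg hc (Finset.prod_nonneg fun k _ => (hF k).eigenvalues_nonneg _))
  have scale : c * (Q * matrixTensor F).trace.re = (Q * conjDiagonal
      (matrixTensor fun k => ((hF k).1.eigenvectorUnitary : Matrix ι ι ℂ))
      fun j => c * ∏ k, (hF k).1.eigenvalues (j k)).trace.re := by
    simp only [matrixTensor_eq_conjDiagonal fun k => (hF k).1, trace_mul_conjDiagonal,
      Finset.mul_sum, mul_assoc]
  rw [scale, matrixTensor_eq_conjDiagonal fun k => (hS k).1]
  refine le_trans (le_of_eq ?_) test
  rw [← Fintype.sum_prod_type',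
    ← (Equiv.arrowProdEquivProdArrow κ (fun _ => ι) fun _ => ι).sum_comp]
  refine congrArg _ (Finset.sum_congr rfl fun ω _ => ?_)
  simp only [Equiv.arrowProdEquivProdArrow, Equiv.coe_fn_mk]
  rw [normSq_star_matrixTensor_mul (fun k => (hS k).1) (fun k => (hF k).1) ω, min_mul_of_nonneg _ _
    (Finset.prod_nonneg fun k _ => eigenOverlap_nonneg _ _ _), mul_assoc,
    ← Finset.prod_mul_distrib, ← Finset.prod_mul_distrib]
  rfl

end HypothesisTesting

/-! ### A minimax principle on the unit interval -/

section Minimax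

variable {E : Type*} [TopologicalSpace E] {K : Set E} {φ : E → ℝ → ℝ}

lemma exists_mem_apply_nonpos_of_Ioo (hK : IsCompact K)
    (hcont : ∀ s ∈ Set.Icc (0 : ℝ) 1, ContinuousOn (φ · s) K)
    (hconc : ∀ x ∈ K, ConcaveOn ℝ (Set.Icc 0 1) (φ x))
    (h : ∀ s ∈ Set.Ioo (0 : ℝ) 1, ∃ x ∈ K, φ x s ≤ 0) {s : ℝ} (hs : s ∈ Set.Icc (0 : ℝ) 1) :
    ∃ x ∈ K, φ x s ≤ 0 := by
  have half_mem : (1 / 2 : ℝ) ∈ Set.Icc (0 : ℝ) 1 := by norm_num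
  have hne : K.Nonempty := (h (1 / 2) (by norm_num)).imp fun _ => And.left
  obtain ⟨x₀, hx₀, min_s⟩ := hK.exists_isMinOn hne (hcont s hs)
  obtain ⟨x₁, -, min_half⟩ := hK.exists_isMinOn hne (hcont _ half_mem)
  refine ⟨x₀, hx₀, ?_⟩
  have segment_nonpos : ∀ t ∈ Set.Ioo (0 : ℝ) 1, (1 - t) * φ x₀ s + t * φ x₁ (1 / 2) ≤ 0 := by
    intro t ht
    obtain ⟨x, hx, hx_nonpos⟩ := h ((1 - t) * s + t * (1 / 2))
      ⟨by nlinarith [hs.1, ht.1, ht.2], by nlinarith [hs.2, ht.1, ht.2]⟩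
    calc (1 - t) * φ x₀ s + t * φ x₁ (1 / 2)
        ≤ (1 - t) * φ x s + t * φ x (1 / 2) := add_le_add
          (mul_le_mul_of_nonneg_left (min_s hx) (sub_pos.2 ht.2).le)
          (mul_le_mul_of_nonneg_left (min_half hx) ht.1.le)
      _ ≤ φ x ((1 - t) * s + t * (1 / 2)) :=
          (hconc x hx).2 hs half_mem (sub_pos.2 ht.2).le ht.1.le (sub_add_cancel 1 t)
      _ ≤ 0 := hx_nonpos
  have limit : Filter.Tendsto (fun t => (1 - t) * φ x₀ s + t * φ x₁ (1 / 2))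
      (nhdsWithin 0 (Set.Ioi 0)) (nhds (φ x₀ s)) :=
    tendsto_nhdsWithin_of_tendsto_nhds <|
      Continuous.tendsto' (by fun_prop) _ _ (by ring)
  exact le_of_tendsto limit (Filter.eventually_of_mem (Ioo_mem_nhdsGT one_pos) segment_nonpos)

theorem exists_forall_apply_nonpos_of_convexOn_concaveOn [AddCommGroup E] [Module ℝ E]
    [IsTopologicalAddGroup E] [ContinuousSMul ℝ E] (hK : IsCompact K)
    (hconv : ∀ s ∈ Set.Icc (0 : ℝ) 1, ConvexOn ℝ K (φ · s))
    (hcont : ∀ s ∈ Set.Icc (0 : ℝ) 1, ContinuousOn (φ · s) K)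
    (hconc : ∀ x ∈ K, ConcaveOn ℝ (Set.Icc 0 1) (φ x))
    (hcont' : ∀ x ∈ K, ContinuousOn (φ x) (Set.Icc 0 1))
    (h : ∀ s ∈ Set.Ioo (0 : ℝ) 1, ∃ x ∈ K, φ x s ≤ 0) :
    ∃ x ∈ K, ∀ s ∈ Set.Icc (0 : ℝ) 1, φ x s ≤ 0 := by
  have hne : K.Nonempty := (h (1 / 2) (by norm_num)).imp fun _ => And.left
  obtain ⟨x, hx, t, ht, saddle⟩ := Sion.exists_isSaddlePointOn hne
    (hconv 0 (Set.left_mem_Icc.2 zero_le_one)).1 hK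
    (fun s hs => (hcont s hs).lowerSemicontinuousOn) (fun s hs => (hconv s hs).quasiconvexOn)
    (convex_Icc 0 1) (Set.nonempty_Icc.2 zero_le_one) isCompact_Icc
    (fun x hx => (hcont' x hx).upperSemicontinuousOn) (fun x hx => (hconc x hx).quasiconcaveOn)
  obtain ⟨y, hy, hy_nonpos⟩ := exists_mem_apply_nonpos_of_Ioo hK hcont hconc h ht
  exact ⟨x, hx, fun s hs => (saddle y hy s hs).trans hy_nonpos⟩

end Minimax

/-! ### Density operators and depolarization -/

section Density

open Matrix
open scoped MatrixOrder Matrix.Norms.L2Operator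

variable {ι : Type*} [Fintype ι] [DecidableEq ι] {S F : Matrix ι ι ℂ}

lemma convex_setOf_isDensity : Convex ℝ {F : Matrix ι ι ℂ | IsDensity F} := by
  intro F hF G hG a b ha hb hab
  refine ⟨(hF.1.smul ha).add (hG.1.smul hb), ?_⟩
  rw [Matrix.trace_add, Matrix.trace_smul, Matrix.trace_smul, hF.2, hG.2, ← add_smul, hab, one_smul]

lemma le_one_of_isDensity (hF : IsDensity F) : F ≤ 1 := by
  have eigenvalue_le (i : ι) : hF.1.1.eigenvalues i ≤ 1 := by
    have total : ∑ j, hF.1.1.eigenvalues j = 1 := by rw [sum_eigenvalues, hF.2, Complex.one_re]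
    exact total ▸ Finset.single_le_sum (fun j _ => hF.1.eigenvalues_nonneg j) (Finset.mem_univ i)
  have gap : 1 - F = conjDiagonal hF.1.1.eigenvectorUnitary fun i => 1 - hF.1.1.eigenvalues i := by
    nth_rw 1 [eq_conjDiagonal hF.1.1]
    simp only [conjDiagonal, Complex.ofReal_sub, Complex.ofReal_one]
    rw [← Matrix.diagonal_sub, Matrix.diagonal_one, Matrix.mul_sub, Matrix.sub_mul, Matrix.mul_one]
    exact congrArg (· - _) (Unitary.coe_mul_star_self hF.1.1.eigenvectorUnitary).symm
  rw [Matrix.le_iff, gap]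
  exact posSemidef_conjDiagonal fun i => sub_nonneg.2 (eigenvalue_le i)

lemma isCompact_setOf_isDensity : IsCompact {F : Matrix ι ι ℂ | IsDensity F} := by
  have := FiniteDimensional.proper ℂ (Matrix ι ι ℂ)
  refine Metric.isCompact_of_isClosed_isBounded ?_ ?_
  · have trace_closed : IsClosed {F : Matrix ι ι ℂ | F.trace = 1} :=
      isClosed_eq (by fun_prop) continuous_const
    have psd_closed : IsClosed {F : Matrix ι ι ℂ | F.PosSemidef} := by
      simpa only [Set.Ici, Matrix.nonneg_iff_posSemidef] using
        isClosed_Ici (a := (0 : Matrix ι ι ℂ))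
    exact psd_closed.inter trace_closed
  · refine (Metric.isBounded_closedBall (x := (0 : Matrix ι ι ℂ)) (r := 1)).subset fun F hF => ?_
    rw [mem_closedBall_zero_iff]
    exact (CStarAlgebra.norm_le_one_iff_of_nonneg F hF.1.nonneg).2 (le_one_of_isDensity hF)

/-- The depolarizing map, which mixes a state with the maximally mixed state in proportion `κ`. It
makes a state invertible at a small cost in `petzTrace`. -/
def depolarize (κ : ℝ) : Matrix ι ι ℂ →ᵃ[ℝ] Matrix ι ι ℂ :=
  AffineMap.homothety ((Fintype.card ι : ℝ)⁻¹ • (1 : Matrix ι ι ℂ)) (1 - κ)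

lemma depolarize_apply (κ : ℝ) (F : Matrix ι ι ℂ) :
    depolarize κ F = κ • (Fintype.card ι : ℝ)⁻¹ • (1 : Matrix ι ι ℂ) + (1 - κ) • F := by
  rw [depolarize, AffineMap.homothety_eq_lineMap, AffineMap.lineMap_apply_module, sub_sub_cancel]

lemma card_pos_of_isDensity (hF : IsDensity F) : (0 : ℝ) < Fintype.card ι := by
  refine Nat.cast_pos.2 (Fintype.card_pos_iff.2 (not_isEmpty_iff.1 fun hempty => ?_))
  simpa [Matrix.trace] using hF.2

variable {κ : ℝ}

lemma isDensity_depolarize (hκ : κ ∈ Set.Ioo (0 : ℝ) 1) (hF : IsDensity F) :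
    IsDensity (depolarize κ F) := by
  have hcard := card_pos_of_isDensity hF
  rw [depolarize_apply]
  refine convex_setOf_isDensity ⟨PosSemidef.one.smul (inv_pos.2 hcard).le, ?_⟩ hF hκ.1.le
    (sub_pos.2 hκ.2).le (add_sub_cancel κ 1)
  rw [Matrix.trace_smul, Matrix.trace_one, Complex.real_smul, Complex.ofReal_inv,
    Complex.ofReal_natCast, inv_mul_cancel₀ (by exact_mod_cast hcard.ne')]

lemma posDef_depolarize (hκ : κ ∈ Set.Ioo (0 : ℝ) 1) (hF : IsDensity F) :
    (depolarize κ F).PosDef := by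
  rw [depolarize_apply]
  exact ((PosDef.one.smul (inv_pos.2 (card_pos_of_isDensity hF))).smul hκ.1).add_posSemidef
    (hF.1.smul (sub_pos.2 hκ.2).le)

lemma mul_petzTrace_le_petzTrace_depolarize (hκ : κ ∈ Set.Ioo (0 : ℝ) 1) (hS : S.PosSemidef)
    (hF : IsDensity F) {s : ℝ} (hs : s ∈ Set.Ioo (0 : ℝ) 1) :
    (1 - κ) * petzTrace S F s ≤ petzTrace S (depolarize κ F) s := by
  have mixed_psd : ((Fintype.card ι : ℝ)⁻¹ • (1 : Matrix ι ι ℂ)).PosSemidef :=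
    PosSemidef.one.smul (by positivity)
  have concave := (concaveOn_trace_mul_rpow (posSemidef_mpow hS (1 - s)) ⟨hs.1.le, hs.2.le⟩).2
    mixed_psd hF.1 hκ.1.le (sub_pos.2 hκ.2).le (add_sub_cancel κ 1)
  have mixed_nonneg :=
    re_trace_mul_nonneg (posSemidef_mpow hS (1 - s)) (posSemidef_mpow mixed_psd s)
  rw [mpow_eq_rpow mixed_psd hs.1.ne'] at mixed_nonneg
  rw [petzTrace, petzTrace, mpow_eq_rpow hF.1 hs.1.ne',
    mpow_eq_rpow (isDensity_depolarize hκ hF).1 hs.1.ne', depolarize_apply]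
  exact (le_add_of_nonneg_left (mul_nonneg hκ.1.le mixed_nonneg)).trans concave

end Density

/-! ### The auxiliary states attaining the sphere packing exponent -/

section WeightedEReal

lemma negLog_nonneg {t : ℝ} (ht : t ≤ 1) : 0 ≤ negLog t := by
  unfold negLog
  split_ifs with hpos
  · exact le_top
  · exact EReal.coe_nonneg.2 (neg_nonneg.2 (Real.log_nonpos (not_le.1 hpos).le ht))

lemma exp_neg_lt_of_negLog_lt {t u : ℝ} (h : negLog t < u) : Real.exp (-u) < t := by
  unfold negLog at h
  split_ifs at h with hpos
  · exact absurd h not_top_lt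
  · rw [← Real.lt_log_iff_exp_lt (not_le.1 hpos), neg_lt]
    exact EReal.coe_lt_coe_iff.1 h

variable {ι : Type*} [Fintype ι] {p : ι → ℝ} {e : ι → EReal}

lemma coe_finsetSum {κ : Type*} (t : Finset κ) (f : κ → ℝ) :
    ((∑ i ∈ t, f i : ℝ) : EReal) = ∑ i ∈ t, (f i : EReal) :=
  map_sum ({ toFun := Real.toEReal, map_zero' := EReal.coe_zero, map_add' := EReal.coe_add } :
    ℝ →+ EReal) f t

lemma ne_top_of_sum_coe_mul_lt_top (hp : ∀ i, 0 ≤ p i) (he : ∀ i, 0 ≤ e i)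
    (h : ∑ i, (p i : EReal) * e i < ⊤) {i : ι} (hi : 0 < p i) : e i ≠ ⊤ := by
  intro htop
  have term_le := Finset.single_le_sum (f := fun j => (p j : EReal) * e j)
    (fun j _ => mul_nonneg (EReal.coe_nonneg.2 (hp j)) (he j)) (Finset.mem_univ i)
  simp only [htop, EReal.coe_mul_top_of_pos hi] at term_le
  exact h.not_ge term_le

lemma coe_sum_mul_toReal (hp : ∀ i, 0 ≤ p i) (he : ∀ i, 0 ≤ e i)
    (h : ∑ i, (p i : EReal) * e i < ⊤) :
    ((∑ i, p i * (e i).toReal : ℝ) : EReal) = ∑ i, (p i : EReal) * e i := by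
  rw [coe_finsetSum]
  refine Finset.sum_congr rfl fun i _ => ?_
  rcases (hp i).eq_or_lt with hzero | hpos
  · simp [← hzero]
  · rw [EReal.coe_mul, EReal.coe_toReal (ne_top_of_sum_coe_mul_lt_top hp he h hpos)
      (EReal.bot_lt_zero.trans_le (he i)).ne']

lemma exists_lt_of_sum_coe_mul_lt (hp : IsProbDist p) (he : ∀ i, 0 ≤ e i) {c : ℝ}
    (h : ∑ i, (p i : EReal) * e i < c) :
    ∃ t : ι → ℝ, (∀ i, 0 < p i → e i < t i) ∧ ∑ i, p i * t i < c := by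
  have finite := h.trans (EReal.coe_lt_top c)
  rw [← coe_sum_mul_toReal hp.1 he finite, EReal.coe_lt_coe_iff] at h
  obtain ⟨c', hlt, hc'⟩ := exists_between h
  refine ⟨fun i => (e i).toReal + (c' - ∑ j, p j * (e j).toReal), fun i hi => ?_, ?_⟩
  · rw [← EReal.coe_toReal (ne_top_of_sum_coe_mul_lt_top hp.1 he finite hi)
      (EReal.bot_lt_zero.trans_le (he i)).ne', EReal.coe_lt_coe_iff]
    exact lt_add_of_pos_right _ (sub_pos.2 hlt)
  · simp only [mul_add, Finset.sum_add_distrib, ← Finset.sum_mul, hp.2]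
    linarith

end WeightedEReal

section Extraction

variable {A X : Type*} [Fintype X] {d : ℕ} {s : ℝ}

lemma E0cc_eq_iInf_petzTrace (S : X → Matrix (Fin d) (Fin d) ℂ) (Q : X → ℝ) (hs : s < 1) :
    E0cc S (s / (1 - s)) Q = ⨅ F : {F : Matrix (Fin d) (Fin d) ℂ // IsDensity F},
      (((1 - s)⁻¹ : ℝ) : EReal) * ∑ x, (Q x : EReal) * negLog (petzTrace (S x) F.1 s) := by
  have hs' : 1 - s ≠ 0 := (sub_pos.2 hs).ne'
  have scale : 1 + s / (1 - s) = (1 - s)⁻¹ := by field_simp; ring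
  have left_exponent : 1 / (1 + s / (1 - s)) = 1 - s := by rw [scale, one_div, inv_inv]
  have right_exponent : s / (1 - s) / (1 + s / (1 - s)) = s := by rw [scale]; field_simp
  simp only [E0cc, petzTrace, left_exponent, right_exponent]
  simp only [scale]

lemma E0cc_nonneg {S : X → Matrix (Fin d) (Fin d) ℂ} (hS : ∀ x, IsDensity (S x)) {Q : X → ℝ}
    (hQ : ∀ x, 0 ≤ Q x) (hs : s ∈ Set.Ioo (0 : ℝ) 1) : 0 ≤ E0cc S (s / (1 - s)) Q := by
  rw [E0cc_eq_iInf_petzTrace S Q hs.2]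
  exact le_iInf fun F => mul_nonneg (EReal.coe_nonneg.2 (inv_pos.2 (sub_pos.2 hs.2)).le) <|
    Finset.sum_nonneg fun x _ => mul_nonneg (EReal.coe_nonneg.2 (hQ x))
      (negLog_nonneg (petzTrace_le_one (hS x) F.2 hs))

lemma exists_isDensity_of_E0cc_lt {S : X → Matrix (Fin d) (Fin d) ℂ} (hS : ∀ x, IsDensity (S x))
    {Q : X → ℝ} (hQ : IsProbDist Q) (hs : s ∈ Set.Ioo (0 : ℝ) 1) {c : ℝ}
    (h : E0cc S (s / (1 - s)) Q < c) :
    ∃ F, IsDensity F ∧ ∃ u : X → ℝ, (∀ x, 0 < Q x → Real.exp (-u x) < petzTrace (S x) F s) ∧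
      ∑ x, Q x * u x < (1 - s) * c := by
  have hs' : 0 < 1 - s := sub_pos.2 hs.2
  rw [E0cc_eq_iInf_petzTrace S Q hs.2] at h
  obtain ⟨⟨F, hF⟩, hlt⟩ := iInf_lt_iff.1 h
  have weighted_lt : ∑ x, (Q x : EReal) * negLog (petzTrace (S x) F s) <
      (((1 - s) * c : ℝ) : EReal) := by
    rwa [mul_comm, ← EReal.lt_div_iff (EReal.coe_pos.2 (inv_pos.2 hs')) (EReal.coe_ne_top _),
      ← EReal.coe_div, div_inv_eq_mul, mul_comm c] at hlt
  obtain ⟨u, hu, hsum⟩ := exists_lt_of_sum_coe_mul_lt hQ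
    (fun x => negLog_nonneg (petzTrace_le_one (hS x) hF hs)) weighted_lt
  exact ⟨F, hF, u, fun x hx => exp_neg_lt_of_negLog_lt (hu x hx), hsum⟩

variable [Fintype A] [DecidableEq A] [DecidableEq X]
  {S : A → X → Matrix (Fin d) (Fin d) ℂ} {P : A → ℝ} {V : A → X → ℝ} {R E : ℝ}

lemma sum_coe_mul_E0cc_lt (h : EspccCond S R P V < E) (hs : s ∈ Set.Ioo (0 : ℝ) 1) :
    ∑ a, (P a : EReal) * E0cc (S a) (s / (1 - s)) (V a) <
      ((E + s / (1 - s) * R : ℝ) : EReal) := by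
  have value_lt := (le_iSup (fun ρ : {ρ : ℝ // 0 ≤ ρ} =>
    (∑ a, (P a : EReal) * E0cc (S a) ρ.1 (V a)) - ((ρ.1 * R : ℝ) : EReal))
    ⟨s / (1 - s), div_nonneg hs.1.le (sub_pos.2 hs.2).le⟩).trans_lt h
  rw [EReal.coe_add]
  exact (EReal.sub_lt_iff (Or.inl (EReal.coe_ne_bot _)) (Or.inl (EReal.coe_ne_top _))).1 value_lt

lemma exists_isDensity_of_EspccCond_lt (hS : ∀ a x, IsDensity (S a x)) (hP : IsProbDist P)
    (hV : ∀ a, IsProbDist (V a)) (h : EspccCond S R P V < E) (hs : s ∈ Set.Ioo (0 : ℝ) 1) :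
    ∃ F : A → Matrix (Fin d) (Fin d) ℂ, (∀ a, IsDensity (F a)) ∧ ∃ u : A → X → ℝ,
      (∀ a x, 0 < P a → 0 < V a x → Real.exp (-u a x) < petzTrace (S a x) (F a) s) ∧
      ∑ a, P a * ∑ x, V a x * u a x < s * R + (1 - s) * E := by
  have hs' : 0 < 1 - s := sub_pos.2 hs.2
  obtain ⟨t, ht, ht_sum⟩ := exists_lt_of_sum_coe_mul_lt hP
    (fun a => E0cc_nonneg (hS a) (hV a).1 hs) (sum_coe_mul_E0cc_lt h hs)
  have choice (a : A) : ∃ F, IsDensity F ∧ ∃ u : X → ℝ, 0 < P a →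
      (∀ x, 0 < V a x → Real.exp (-u x) < petzTrace (S a x) F s) ∧
      ∑ x, V a x * u x < (1 - s) * t a := by
    rcases (hP.1 a).eq_or_lt with hzero | hpos
    · obtain ⟨x, -⟩ := Finset.nonempty_of_sum_ne_zero ((hV a).2.trans_ne one_ne_zero)
      exact ⟨S a x, hS a x, 0, fun hpos => absurd hpos hzero.not_lt⟩
    · obtain ⟨F, hF, u, hu⟩ := exists_isDensity_of_E0cc_lt (hS a) (hV a) hs (ht a hpos)
      exact ⟨F, hF, u, fun _ => hu⟩
  choose F hF u hu using choice
  refine ⟨F, hF, u, fun a x ha => (hu a ha).1 x, ?_⟩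
  calc ∑ a, P a * ∑ x, V a x * u a x
      ≤ ∑ a, P a * ((1 - s) * t a) := Finset.sum_le_sum fun a _ => by
        rcases (hP.1 a).eq_or_lt with hzero | hpos
        · simp only [← hzero, zero_mul, le_refl]
        · exact mul_le_mul_of_nonneg_left (hu a hpos).2.le hpos.le
    _ = (1 - s) * ∑ a, P a * t a := by
        rw [Finset.mul_sum]
        exact Finset.sum_congr rfl fun a _ => by ring
    _ < (1 - s) * (E + s / (1 - s) * R) := mul_lt_mul_of_pos_left ht_sum hs'
    _ = s * R + (1 - s) * E := by field_simp; ring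

end Extraction

section MeanLogPetzTrace

variable {A L ι : Type*} [Fintype L] [Fintype ι] [DecidableEq ι] {w : L → ℝ}
  {S F : L → Matrix ι ι ℂ}

/-- The `w`-average of `log Tr (S ^ (1 - s) F ^ s)` over the letters, the quantity whose lower
bounds, uniform in `s`, encode the sphere packing exponent. -/
def meanLogPetzTrace (w : L → ℝ) (S F : L → Matrix ι ι ℂ) (s : ℝ) : ℝ :=
  ∑ l, w l * Real.log (petzTrace (S l) (F l) s)

lemma convexOn_sum_mul {E : Type*} [AddCommMonoid E] [Module ℝ E] {K : Set E} (hK : Convex ℝ K)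
    (hw : ∀ l, 0 ≤ w l) {f : L → E → ℝ} (hf : ∀ l, ConvexOn ℝ K (f l)) :
    ConvexOn ℝ K fun x => ∑ l, w l * f l x := by
  refine ⟨hK, fun x hx y hy a b ha hb hab => ?_⟩
  simp only [Finset.smul_sum, ← Finset.sum_add_distrib]
  exact Finset.sum_le_sum fun l _ => ((hf l).smul (hw l)).2 hx hy ha hb hab

lemma convexOn_meanLogPetzTrace (hw : ∀ l, 0 ≤ w l) (hS : ∀ l, IsDensity (S l))
    (hF : ∀ l, (F l).PosDef) : ConvexOn ℝ Set.univ (meanLogPetzTrace w S F) :=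
  convexOn_sum_mul convex_univ hw fun l => convexOn_log_petzTrace (hS l) (hF l)

lemma continuous_meanLogPetzTrace (hS : ∀ l, IsDensity (S l)) (hF : ∀ l, (F l).PosDef) :
    Continuous (meanLogPetzTrace w S F) :=
  continuous_finsetSum _ fun l _ => continuous_const.mul (continuous_log_petzTrace (hS l) (hF l))

lemma concaveOn_meanLogPetzTrace (hw : ∀ l, 0 ≤ w l) (hS : ∀ l, IsDensity (S l)) (g : L → A)
    {s : ℝ} (hs : s ∈ Set.Icc (0 : ℝ) 1) :
    ConcaveOn ℝ {F : A → Matrix ι ι ℂ | ∀ a, (F a).PosDef}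
      fun F => meanLogPetzTrace w S (F ∘ g) s := by
  have hconvex : Convex ℝ {F : A → Matrix ι ι ℂ | ∀ a, (F a).PosDef} :=
    fun F hF G hG a b ha hb hab l => convex_setOf_posDef (hF l) (hG l) ha hb hab
  have neg_convex := convexOn_sum_mul hconvex hw fun l =>
    ((concaveOn_log_petzTrace (hS l) hs).comp_linearMap
      (LinearMap.proj (φ := fun _ : A => Matrix ι ι ℂ) (g l))).neg.subset (fun F hF => hF _) hconvex
  refine neg_convex.neg.congr fun F _ => ?_
  simp [meanLogPetzTrace]

lemma continuousOn_meanLogPetzTrace (hS : ∀ l, IsDensity (S l)) (g : L → A) (s : ℝ) :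
    ContinuousOn (fun F : A → Matrix ι ι ℂ => meanLogPetzTrace w S (F ∘ g) s)
      {F | ∀ a, (F a).PosDef} :=
  continuousOn_finsetSum _ fun l _ => continuousOn_const.mul <|
    (continuousOn_log_petzTrace (hS l) s).comp (continuous_apply (g l)).continuousOn
      fun _ hF => hF _

lemma exists_forall_le_meanLogPetzTrace (hw : ∀ l, 0 ≤ w l) (hS : ∀ l, IsDensity (S l)) (g : L → A)
    {K : Set (A → Matrix ι ι ℂ)} (hK : IsCompact K) (hKconvex : Convex ℝ K)
    (hKpos : ∀ F ∈ K, ∀ a, (F a).PosDef) {R E : ℝ}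
    (h : ∀ s ∈ Set.Ioo (0 : ℝ) 1, ∃ F ∈ K,
      -(s * R + (1 - s) * E) ≤ meanLogPetzTrace w S (F ∘ g) s) :
    ∃ F ∈ K, ∀ s ∈ Set.Icc (0 : ℝ) 1,
      -(s * R + (1 - s) * E) ≤ meanLogPetzTrace w S (F ∘ g) s := by
  have affine_concave : ConcaveOn ℝ (Set.Icc (0 : ℝ) 1) fun s => -(s * R + (1 - s) * E) := by
    refine ⟨convex_Icc 0 1, fun x _ y _ a b _ _ hab => le_of_eq ?_⟩
    simp only [smul_eq_mul]
    linear_combination -E * hab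
  have affine_continuous : Continuous fun s => -(s * R + (1 - s) * E) := by fun_prop
  simp only [← sub_nonpos (b := meanLogPetzTrace _ _ _ _)] at h ⊢
  exact exists_forall_apply_nonpos_of_convexOn_concaveOn hK
    (fun s hs => (convexOn_const _ hKconvex).sub
      ((concaveOn_meanLogPetzTrace hw hS g hs).subset hKpos hKconvex))
    (fun s _ => continuousOn_const.sub ((continuousOn_meanLogPetzTrace hS g s).mono hKpos))
    (fun F hF => affine_concave.sub ((convexOn_meanLogPetzTrace hw hS
      fun l => hKpos F hF (g l)).subset (Set.subset_univ _) (convex_Icc 0 1)))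
    (fun F hF => (affine_continuous.sub
      (continuous_meanLogPetzTrace hS fun l => hKpos F hF (g l))).continuousOn) h

lemma one_sub_exp_neg_mem_Ioo {η : ℝ} (hη : 0 < η) : 1 - Real.exp (-η) ∈ Set.Ioo (0 : ℝ) 1 :=
  ⟨sub_pos.2 (Real.exp_lt_one_iff.2 (neg_lt_zero.2 hη)), sub_lt_self _ (Real.exp_pos _)⟩

lemma sub_sum_le_meanLogPetzTrace_depolarize (hw : IsProbDist w) (hS : ∀ l, IsDensity (S l))
    (hF : ∀ l, IsDensity (F l)) {η : ℝ} (hη : 0 < η) {s : ℝ} (hs : s ∈ Set.Ioo (0 : ℝ) 1)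
    {u : L → ℝ} (hu : ∀ l, 0 < w l → Real.exp (-u l) < petzTrace (S l) (F l) s) :
    -η - ∑ l, w l * u l ≤
      meanLogPetzTrace w S (fun l => depolarize (1 - Real.exp (-η)) (F l)) s := by
  have hκ := one_sub_exp_neg_mem_Ioo hη
  have letter (l : L) : w l * (-η - u l) ≤
      w l * Real.log (petzTrace (S l) (depolarize (1 - Real.exp (-η)) (F l)) s) := by
    rcases (hw.1 l).eq_or_lt with hzero | hpos
    · simp only [← hzero, zero_mul, le_refl]
    · have mixing := mul_petzTrace_le_petzTrace_depolarize hκ (hS l).1 (hF l) hs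
      rw [sub_sub_cancel] at mixing
      refine mul_le_mul_of_nonneg_left ((Real.le_log_iff_exp_le
        (petzTrace_pos (hS l) (posDef_depolarize hκ (hF l)) s)).2 ?_) hpos.le
      rw [sub_eq_add_neg, Real.exp_add]
      exact (mul_le_mul_of_nonneg_left (hu l hpos).le (Real.exp_pos _).le).trans mixing
  calc -η - ∑ l, w l * u l = ∑ l, w l * (-η - u l) := by
        simp only [mul_sub, Finset.sum_sub_distrib, ← Finset.sum_mul, hw.2, one_mul]
    _ ≤ _ := Finset.sum_le_sum fun l _ => letter l

end MeanLogPetzTrace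

section Selection

/-- The joint distribution of a state and an input symbol. -/
def jointDist {A X : Type*} (P : A → ℝ) (V : A → X → ℝ) : A × X → ℝ := fun l => P l.1 * V l.1 l.2

variable {A X : Type*} [Fintype A] [Fintype X] {d : ℕ} {P : A → ℝ} {V : A → X → ℝ}

lemma sum_jointDist_mul (P : A → ℝ) (V : A → X → ℝ) (f : A × X → ℝ) :
    ∑ l, jointDist P V l * f l = ∑ a, P a * ∑ x, V a x * f (a, x) := by
  simp only [Fintype.sum_prod_type, jointDist, Finset.mul_sum, mul_assoc]

lemma isProbDist_jointDist (hP : IsProbDist P) (hV : ∀ a, IsProbDist (V a)) :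
    IsProbDist (jointDist P V) := by
  refine ⟨fun l => mul_nonneg (hP.1 l.1) ((hV l.1).1 l.2), ?_⟩
  have total := sum_jointDist_mul P V 1
  simpa only [Pi.one_apply, mul_one, (hV _).2, hP.2] using total

lemma tendsto_sum_jointDist_mul {α : Type*} {f : Filter α} {p : α → A → ℝ} {W : α → A → X → ℝ}
    (hp : Filter.Tendsto p f (nhds P)) (hW : Filter.Tendsto W f (nhds V)) (D : A × X → ℝ) :
    Filter.Tendsto (fun i => ∑ l, jointDist (p i) (W i) l * D l) f
      (nhds (∑ l, jointDist P V l * D l)) :=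
  tendsto_finsetSum _ fun l _ => ((tendsto_pi_nhds.1 hp l.1).mul
    (tendsto_pi_nhds.1 (tendsto_pi_nhds.1 hW l.1) l.2)).mul_const _

lemma isCompact_pi_image_depolarize (A : Type*) (d : ℕ) (κ : ℝ) :
    IsCompact (Set.univ.pi fun _ : A =>
      depolarize κ '' {F : Matrix (Fin d) (Fin d) ℂ | IsDensity F}) :=
  isCompact_univ_pi fun _ =>
    isCompact_setOf_isDensity.image (AffineMap.homothety_continuous _ _)

lemma convex_pi_image_depolarize (A : Type*) (d : ℕ) (κ : ℝ) :
    Convex ℝ (Set.univ.pi fun _ : A =>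
      depolarize κ '' {F : Matrix (Fin d) (Fin d) ℂ | IsDensity F}) :=
  convex_pi fun _ _ => convex_setOf_isDensity.affine_image _

variable [DecidableEq A] [DecidableEq X] {S : A → X → Matrix (Fin d) (Fin d) ℂ} {R E η : ℝ}

lemma exists_depolarize_meanLogPetzTrace_ge (hS : ∀ a x, IsDensity (S a x)) (hP : IsProbDist P)
    (hV : ∀ a, IsProbDist (V a)) (hE : EspccCond S R P V < E) (hη : 0 < η) {s : ℝ}
    (hs : s ∈ Set.Ioo (0 : ℝ) 1) :
    ∃ F : A → Matrix (Fin d) (Fin d) ℂ, (∀ a, IsDensity (F a)) ∧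
      -(s * (R + η) + (1 - s) * (E + η)) ≤ meanLogPetzTrace (jointDist P V)
        (fun l => S l.1 l.2) (fun l => depolarize (1 - Real.exp (-η)) (F l.1)) s := by
  obtain ⟨F, hF, u, hu, hu_sum⟩ := exists_isDensity_of_EspccCond_lt hS hP hV hE hs
  refine ⟨F, hF, ?_⟩
  have mixing_cost := sub_sum_le_meanLogPetzTrace_depolarize (isProbDist_jointDist hP hV)
    (fun l => hS l.1 l.2) (fun l => hF l.1) hη hs (u := fun l => u l.1 l.2) fun l hl =>
      hu l.1 l.2 (pos_of_mul_pos_left hl ((hV l.1).1 l.2)) (pos_of_mul_pos_right hl (hP.1 l.1))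
  rw [sum_jointDist_mul] at mixing_cost
  linarith

theorem exists_posDef_forall_meanLogPetzTrace_ge (hS : ∀ a x, IsDensity (S a x))
    (hP : IsProbDist P) (hV : ∀ a, IsProbDist (V a)) (hE : EspccCond S R P V < E) (hη : 0 < η) :
    ∃ F : A → Matrix (Fin d) (Fin d) ℂ, (∀ a, IsDensity (F a)) ∧ (∀ a, (F a).PosDef) ∧
      ∀ s ∈ Set.Icc (0 : ℝ) 1, -(s * (R + η) + (1 - s) * (E + η)) ≤
        meanLogPetzTrace (jointDist P V) (fun l => S l.1 l.2) (fun l => F l.1) s := by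
  set κ := 1 - Real.exp (-η)
  have hκ : κ ∈ Set.Ioo (0 : ℝ) 1 := one_sub_exp_neg_mem_Ioo hη
  set K : Set (A → Matrix (Fin d) (Fin d) ℂ) :=
    Set.univ.pi fun _ => depolarize κ '' {F | IsDensity F}
  have posDef {F} (hF : F ∈ K) (a : A) : (F a).PosDef := by
    obtain ⟨G, hG, hGF⟩ := hF a (Set.mem_univ a)
    exact hGF ▸ posDef_depolarize hκ hG
  have isDensity {F} (hF : F ∈ K) (a : A) : IsDensity (F a) := by
    obtain ⟨G, hG, hGF⟩ := hF a (Set.mem_univ a)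
    exact hGF ▸ isDensity_depolarize hκ hG
  obtain ⟨F, hFK, hF⟩ := exists_forall_le_meanLogPetzTrace (isProbDist_jointDist hP hV).1
    (fun l => hS l.1 l.2) Prod.fst (isCompact_pi_image_depolarize A d κ)
    (convex_pi_image_depolarize A d κ) (fun _ hF => posDef hF) fun s hs => by
      obtain ⟨F, hF, hFs⟩ := exists_depolarize_meanLogPetzTrace_ge hS hP hV hE hη hs
      exact ⟨_, fun a _ => ⟨F a, hF a, rfl⟩, hFs⟩
  exact ⟨F, isDensity hFK, posDef hFK, hF⟩

end Selection

/-! ### The converse for codes -/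

section ProductTest

variable {L ι : Type*} [Fintype L] [Fintype ι] [DecidableEq ι] {w : L → ℝ} {S F : L → Matrix ι ι ℂ}

theorem exists_forall_quarter_exp_le_test_error (hS : ∀ l, IsDensity (S l))
    (hF : ∀ l, (F l).PosDef) {E R η : ℝ} (hη : 0 < η)
    (h : ∀ s ∈ Set.Icc (0 : ℝ) 1, -(s * R + (1 - s) * E) ≤ meanLogPetzTrace w S F s) :
    ∃ D₁ D₂ : L → ℝ, ∑ l, w l * D₁ l ≤ E ∧ ∑ l, w l * D₂ l ≤ R ∧
      ∃ n₀ : ℕ, ∀ n ≥ n₀, ∀ (ℓ : Fin n → L) (d₁ d₂ : ℝ),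
        ∑ i, D₁ (ℓ i) ≤ n * d₁ → ∑ i, D₂ (ℓ i) ≤ n * d₂ →
        ∀ Q : Matrix (Fin n → ι) (Fin n → ι) ℂ, Q.PosSemidef → (1 - Q).PosSemidef →
          1 / 4 * Real.exp (-(n * (d₁ + η))) ≤
            ((1 - Q) * matrixTensor fun i => S (ℓ i)).trace.re +
              Real.exp (n * (d₂ - d₁)) * (Q * matrixTensor fun i => F (ℓ i)).trace.re := by
  simp only [meanLogPetzTrace, petzTrace_eq_partitionFn (hS _).1 (hF _)] at h
  obtain ⟨D₁, D₂, hD₁, hD₂, n₀, hn₀⟩ := exists_forall_half_exp_le_sum_min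
    (fun l => nsLeft_nonneg (hS l).1 (hF l).1) (fun l => sum_nsLeft_pos (hS l) (hF l).1) hη h
  refine ⟨D₁, D₂, hD₁, hD₂, n₀, fun n hn ℓ d₁ d₂ hd₁ hd₂ Q hQ hQ1 => ?_⟩
  have quantum := half_sum_min_prod_ns_le (fun i => (hS (ℓ i)).1)
    (fun i => (hF (ℓ i)).posSemidef) hQ hQ1 (Real.exp_pos (n * (d₂ - d₁))).le
  have pointwise (ω : Fin n → ι × ι) :
      min (∏ i, nsLeft (hS (ℓ i)).1.1 (hF (ℓ i)).1 (ω i))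
        (Real.exp (n * (d₂ - d₁)) * ∏ i, nsLeft (hS (ℓ i)).1.1 (hF (ℓ i)).1 (ω i) *
          Real.exp (nsLogRatio (hS (ℓ i)).1.1 (hF (ℓ i)).1 (ω i))) ≤
      min (∏ i, nsLeft (hS (ℓ i)).1.1 (hF (ℓ i)).1 (ω i))
        (Real.exp (n * (d₂ - d₁)) * ∏ i, nsRight (hS (ℓ i)).1.1 (hF (ℓ i)).1 (ω i)) :=
    min_le_min_left _ <| mul_le_mul_of_nonneg_left (Finset.prod_le_prod
      (fun i _ => mul_nonneg (nsLeft_nonneg (hS (ℓ i)).1 (hF (ℓ i)).1 _) (Real.exp_pos _).le)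
      fun i _ => nsLeft_mul_exp_nsLogRatio_le (hS (ℓ i)).1 (hF (ℓ i)) _) (Real.exp_pos _).le
  linarith [hn₀ n hn ℓ d₁ d₂ hd₁ hd₂, Finset.sum_le_sum fun ω (_ : ω ∈ Finset.univ) => pointwise ω]

end ProductTest

section Codes

variable {ι : Type*} [Fintype ι] [DecidableEq ι] {M : ℕ} {Pv : Fin M → Matrix ι ι ℂ}

lemma posSemidef_one_sub_of_isPOVM (hPv : IsPOVM Pv) (m : Fin M) : (1 - Pv m).PosSemidef := by
  have split : 1 - Pv m = (1 - ∑ j, Pv j) + ∑ j ∈ Finset.univ.erase m, Pv j := by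
    rw [← Finset.add_sum_erase _ _ (Finset.mem_univ m)]
    abel
  rw [split]
  exact hPv.2.add (Matrix.posSemidef_sum _ fun j _ => hPv.1 j)

lemma sum_re_trace_mul_le_one (hPv : IsPOVM Pv) {F : Matrix ι ι ℂ} (hF : IsDensity F) :
    ∑ m, (Pv m * F).trace.re ≤ 1 := by
  have rest_nonneg := re_trace_mul_nonneg hPv.2 hF.1
  rw [Matrix.sub_mul, Matrix.one_mul, Matrix.trace_sub, hF.2, Finset.sum_mul, Matrix.trace_sum,
    Complex.sub_re, Complex.re_sum, Complex.one_re] at rest_nonneg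
  linarith

lemma exists_re_trace_mul_le_inv (hPv : IsPOVM Pv) {F : Matrix ι ι ℂ} (hF : IsDensity F)
    (hM : 0 < M) : ∃ m, (Pv m * F).trace.re ≤ (M : ℝ)⁻¹ := by
  have : NeZero M := ⟨hM.ne'⟩
  obtain ⟨m, -, hm⟩ := Finset.exists_le_of_sum_le (g := fun _ => (M : ℝ)⁻¹)
    (Finset.univ_nonempty (α := Fin M)) <| by
      simpa [hM.ne'] using sum_re_trace_mul_le_one hPv hF
  exact ⟨m, hm⟩

variable {A X : Type*} {d n : ℕ} {S : A → X → Matrix (Fin d) (Fin d) ℂ}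

lemma le_iSup_error_add (hS : ∀ a x, IsDensity (S a x)) {F : Matrix (Fin n → Fin d) _ ℂ}
    (hF : IsDensity F) (a : Fin n → A) {w : Fin M → Fin n → X}
    {Pv : Fin M → Matrix (Fin n → Fin d) (Fin n → Fin d) ℂ} (hPv : IsPOVM Pv) {R : ℝ}
    (hM : Real.exp (n * R) ≤ M) {c β : ℝ} (hc : 0 ≤ c)
    (test : ∀ m Q, Q.PosSemidef → (1 - Q).PosSemidef →
      β ≤ ((1 - Q) * signalStateVar S a (w m)).trace.re + c * (Q * F).trace.re) :
    β ≤ (⨆ m, (1 - (Pv m * signalStateVar S a (w m)).trace.re)) + c * Real.exp (-(n * R)) := by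
  obtain ⟨m, hm⟩ := exists_re_trace_mul_le_inv hPv hF
    (Nat.cast_pos.1 ((Real.exp_pos _).trans_le hM))
  have signal_trace : (signalStateVar S a (w m)).trace = 1 :=
    (isDensity_matrixTensor fun k => hS (a k) (w m k)).2
  have error_eq : ((1 - Pv m) * signalStateVar S a (w m)).trace.re =
      1 - (Pv m * signalStateVar S a (w m)).trace.re := by
    rw [Matrix.sub_mul, Matrix.one_mul, Matrix.trace_sub, signal_trace, Complex.sub_re,
      Complex.one_re]
  have false_alarm : (Pv m * F).trace.re ≤ Real.exp (-(n * R)) := by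
    rw [Real.exp_neg]
    exact hm.trans (inv_anti₀ (Real.exp_pos _) hM)
  refine (test m (Pv m) (hPv.1 m) (posSemidef_one_sub_of_isPOVM hPv m)).trans
    (add_le_add ?_ (mul_le_mul_of_nonneg_left false_alarm hc))
  rw [error_eq]
  exact le_ciSup (f := fun m => 1 - (Pv m * signalStateVar S a (w m)).trace.re)
    (Set.finite_range _).bddAbove m

end Codes

section Composition

variable {L A X : Type*} [Fintype L] [DecidableEq L] [Fintype A] [DecidableEq A] [Fintype X]
  [DecidableEq X] {n : ℕ}

lemma sum_comp_eq_mul_sum_composition (w : Fin n → L) (D : L → ℝ) :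
    ∑ i, D (w i) = n * ∑ l, composition w l * D l := by
  rcases n.eq_zero_or_pos with rfl | hn
  · simp
  · rw [← Finset.sum_fiberwise Finset.univ w, Finset.mul_sum]
    refine Finset.sum_congr rfl fun l _ => ?_
    rw [Finset.sum_congr rfl fun i hi => congrArg D (Finset.mem_filter.1 hi).2, Finset.sum_const,
      nsmul_eq_mul, composition]
    field_simp

open scoped Finset in
-- A state `α` that never occurs is harmless: there `condComp a w α` is `0 / 0 = 0`.
lemma jointDist_composition_condComp (a : Fin n → A) (w : Fin n → X) :
    jointDist (composition a) (condComp a w) = composition fun i => (a i, w i) := by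
  ext ⟨α, ξ⟩
  simp only [jointDist, composition, condComp, Prod.mk.injEq]
  rcases eq_or_ne (#{i | a i = α} : ℝ) 0 with hzero | hne
  · have empty : #{i | a i = α ∧ w i = ξ} = 0 :=
      Nat.eq_zero_of_le_zero <| (Finset.card_le_card <|
        Finset.monotone_filter_right _ fun i _ hi => hi.1).trans (Nat.cast_eq_zero.1 hzero).le
    simp [hzero, empty]
  · field_simp

end Composition

section Reliability

variable {A X : Type*} [Fintype A] [DecidableEq A] [Fintype X] [DecidableEq X] {d : ℕ}
  {S : A → X → Matrix (Fin d) (Fin d) ℂ} {F : A → Matrix (Fin d) (Fin d) ℂ} {P : A → ℝ}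
  {V : A → X → ℝ} {R E η : ℝ}

lemma le_PemaxCond {n : ℕ} {a : Fin n → A} {W : A → X → ℝ} (hW : ∃ w, condComp a w = W) {e : ℝ}
    (h : ∀ (M : ℕ) (w : Fin M → Fin n → X) (Pv : Fin M → Matrix (Fin n → Fin d) _ ℂ),
      Real.exp (n * R) ≤ M → (∀ m, condComp a (w m) = W) → IsPOVM Pv →
        e ≤ ⨆ m, (1 - (Pv m * signalStateVar S a (w m)).trace.re)) :
    e ≤ PemaxCond S n R a W := by
  refine le_csInf ?_ ?_
  · obtain ⟨w, hw⟩ := hW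
    refine ⟨_, ⌈Real.exp (n * R)⌉₊, fun _ => w, fun _ => 0, Nat.le_ceil _, fun _ => hw,
      ⟨fun _ => Matrix.PosSemidef.zero, ?_⟩, rfl⟩
    simpa only [Finset.sum_const_zero, sub_zero] using Matrix.PosSemidef.one
  · rintro _ ⟨M, w, Pv, hM, hw, hPv, rfl⟩
    exact h M w Pv hM hw hPv

theorem exists_forall_quarter_exp_sub_le_PemaxCond (hS : ∀ a x, IsDensity (S a x))
    (hF : ∀ a, IsDensity (F a)) (hFpos : ∀ a, (F a).PosDef) (hη : 0 < η)
    (h : ∀ s ∈ Set.Icc (0 : ℝ) 1, -(s * R + (1 - s) * E) ≤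
      meanLogPetzTrace (jointDist P V) (fun l => S l.1 l.2) (fun l => F l.1) s) :
    ∃ D₁ D₂ : A × X → ℝ, ∑ l, jointDist P V l * D₁ l ≤ E ∧ ∑ l, jointDist P V l * D₂ l ≤ R ∧
      ∃ n₀ : ℕ, ∀ n ≥ n₀, ∀ (a : Fin n → A) (W : A → X → ℝ), (∃ w, condComp a w = W) →
        ∀ d₁ d₂ R' : ℝ, ∑ l, jointDist (composition a) W l * D₁ l ≤ d₁ →
          ∑ l, jointDist (composition a) W l * D₂ l ≤ d₂ →
          1 / 4 * Real.exp (-(n * (d₁ + η))) - Real.exp (n * (d₂ - d₁)) * Real.exp (-(n * R')) ≤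
            PemaxCond S n R' a W := by
  obtain ⟨D₁, D₂, hD₁, hD₂, n₀, hn₀⟩ := exists_forall_quarter_exp_le_test_error
    (fun l : A × X => hS l.1 l.2) (fun l => hFpos l.1) hη h
  refine ⟨D₁, D₂, hD₁, hD₂, n₀, fun n hn a W hW d₁ d₂ R' hd₁ hd₂ => le_PemaxCond hW ?_⟩
  intro M w Pv hM hw hPv
  have letter_sum_le {D : A × X → ℝ} {δ : ℝ} (hδ : ∑ l, jointDist (composition a) W l * D l ≤ δ)
      (m : Fin M) : ∑ i, D (a i, w m i) ≤ n * δ := by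
    rw [sum_comp_eq_mul_sum_composition (fun i => (a i, w m i)),
      ← jointDist_composition_condComp, hw m]
    exact mul_le_mul_of_nonneg_left hδ n.cast_nonneg
  exact sub_le_iff_le_add.2 <| le_iSup_error_add hS (isDensity_matrixTensor fun i => hF (a i)) a
    hPv hM (Real.exp_pos _).le fun m => hn₀ n hn (fun i => (a i, w m i)) d₁ d₂
      (letter_sum_le hd₁ m) (letter_sum_le hd₂ m)

lemma exp_neg_le_quarter_exp_sub {n E R R' η : ℝ} (hn : 0 ≤ n) (hR : R + 4 * η ≤ R')
    (hsmall : Real.exp (-(n * (2 * η))) ≤ 1 / 8) :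
    Real.exp (-(n * (E + 4 * η))) ≤ 1 / 4 * Real.exp (-(n * (E + η + η))) -
      Real.exp (n * (R + η - (E + η))) * Real.exp (-(n * R')) := by
  have first : Real.exp (-(n * (E + 4 * η))) =
      Real.exp (-(n * (E + η + η))) * Real.exp (-(n * (2 * η))) := by
    rw [← Real.exp_add]
    congr 1
    ring
  have second : Real.exp (n * (R + η - (E + η))) * Real.exp (-(n * R')) ≤
      Real.exp (-(n * (E + 4 * η))) := by
    rw [← Real.exp_add, Real.exp_le_exp]
    linarith [mul_le_mul_of_nonneg_left hR hn]
  linarith [mul_le_mul_of_nonneg_left hsmall (Real.exp_pos (-(n * (E + η + η)))).le]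

lemma inv_mul_negLog_le {t n : ℝ} (hn : 0 < n) (ht : Real.exp (-(n * E)) ≤ t) :
    ((n⁻¹ : ℝ) : EReal) * negLog t ≤ E := by
  have ht0 : 0 < t := (Real.exp_pos _).trans_le ht
  rw [negLog, if_neg ht0.not_ge, ← EReal.coe_mul, EReal.coe_le_coe_iff, inv_mul_le_iff₀ hn]
  exact neg_le.1 ((Real.le_log_iff_exp_le ht0).2 ht)

theorem eventually_exp_neg_le_PemaxCond (hS : ∀ a x, IsDensity (S a x))
    (hP : IsProbDist P) (hV : ∀ a, IsProbDist (V a)) (hE : EspccCond S R P V < E) (hη : 0 < η)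
    {R' : ℝ} (hR : R + 5 * η ≤ R') {a : (n : ℕ) → Fin n → A} {W : ℕ → A → X → ℝ}
    (ha : Filter.Tendsto (fun n => composition (a n)) Filter.atTop (nhds P))
    (hW : Filter.Tendsto W Filter.atTop (nhds V)) (hWa : ∀ n, ∃ w, condComp (a n) w = W n) :
    ∀ᶠ n : ℕ in Filter.atTop, Real.exp (-(n * (E + 5 * η))) ≤ PemaxCond S n R' (a n) (W n) := by
  obtain ⟨F, hF, hFpos, hFmean⟩ := exists_posDef_forall_meanLogPetzTrace_ge hS hP hV hE hη
  obtain ⟨D₁, D₂, hD₁, hD₂, n₀, hn₀⟩ :=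
    exists_forall_quarter_exp_sub_le_PemaxCond hS hF hFpos hη hFmean
  have lt_slack (x : ℝ) : x < x + η := lt_add_of_pos_right x hη
  have smallness : Filter.Tendsto (fun n : ℕ => Real.exp (-(n * (2 * η)))) Filter.atTop (nhds 0) :=
    Real.tendsto_exp_neg_atTop_nhds_zero.comp
      (tendsto_natCast_atTop_atTop.atTop_mul_const (by positivity))
  filter_upwards [Filter.eventually_ge_atTop n₀,
    (tendsto_sum_jointDist_mul ha hW D₁).eventually_le_const (hD₁.trans_lt (lt_slack _)),
    (tendsto_sum_jointDist_mul ha hW D₂).eventually_le_const (hD₂.trans_lt (lt_slack _)),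
    smallness.eventually_le_const (by norm_num : (0 : ℝ) < 1 / 8)] with n hn mean₁ mean₂ hsmall
  calc Real.exp (-(n * (E + 5 * η))) = Real.exp (-(n * (E + η + 4 * η))) := by ring_nf
    _ ≤ _ := exp_neg_le_quarter_exp_sub n.cast_nonneg (by linarith) hsmall
    _ ≤ _ := hn₀ n hn (a n) (W n) (hWa n) _ _ R' mean₁ mean₂

theorem relECond_le_of_EspccCond_sub_lt (hS : ∀ a x, IsDensity (S a x)) (hP : IsProbDist P)
    (hV : ∀ a, IsProbDist (V a)) {ε : ℝ} (hε : 0 < ε) (hE : EspccCond S (R - ε) P V < E) :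
    relECond S R P V ≤ E := by
  obtain ⟨E₀, hE₀, hE₀E⟩ := EReal.lt_iff_exists_real_btwn.1 hE
  obtain ⟨η, hη, hη_lt⟩ := exists_between
    (lt_min (sub_pos.2 (EReal.coe_lt_coe_iff.1 hE₀E)) hε)
  obtain ⟨hηE, hηε⟩ := lt_min_iff.1 hη_lt
  refine iSup_le fun ⟨s, ha, hW, hWa⟩ => Filter.limsup_le_of_le (by isBoundedDefault) ?_
  filter_upwards [Filter.eventually_gt_atTop 0, eventually_exp_neg_le_PemaxCond hS hP hV hE₀
    (by positivity : 0 < η / 5) (R' := R) (by linarith) ha hW hWa] with n hn hPe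
  refine inv_mul_negLog_le (Nat.cast_pos.2 hn) ((Real.exp_le_exp.2 ?_).trans hPe)
  exact neg_le_neg (mul_le_mul_of_nonneg_left (by linarith) n.cast_nonneg)

end Reliability

/-- **Conditional sphere packing bound for varying classical-quantum channels**:
`E({Cₐ}, R, P, V) ≤ E_sp^cc({Cₐ}, R-ε, P, V)`. -/
theorem conditional_sphere_packing_bound
    {A X : Type*} [Fintype A] [DecidableEq A] [Fintype X] [DecidableEq X] {d : ℕ}
    (S : A → X → Matrix (Fin d) (Fin d) ℂ) (hS : ∀ a x, IsDensity (S a x))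
    (P : A → ℝ) (hP : IsProbDist P)
    (V : A → X → ℝ) (hV : ∀ a, IsProbDist (V a))
    (R : ℝ) (hR : 0 < R) (ε : ℝ) (hε : 0 < ε) (hεR : ε < R) :
    relECond S R P V ≤ EspccCond S (R - ε) P V :=
  EReal.le_of_forall_lt_iff_le.1 fun _E hE => relECond_le_of_EspccCond_sub_lt hS hP hV hε hE

end SPB
end
end
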